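/- arXiv:2106.04299 — 7 statements merged into one kernel-verified Lean document; each statement's English description precedes it below -/
import Mathlib

section
/- Core game-value inequality in the proof of the eff*-versus-γ₂ theorem: Let f, f' : X × Y → {−1,+1}, let p be a probability distribution on X × Y, let 0 < ε < 1, and let η > 0. Suppose a finite-dimensional two-party entangled zero-communication protocol with abort has correlation q satisfying: for every (x,y) ∈ X × Y, ∑_{a,b ∈ {−1,+1}} q(a,b|x,y) = η, and ∑_{x,y} p(x,y) ∑_{a,b ∈ {−1,+1} : a·b = f(x,y)} q(a,b|x,y) ≥ (1 − ε)·η. Then 2·ω*(G(p, V_{f'})) − 1 ≥ η · ( ∑_{x,y} p(x,y)·f(x,y)·f'(x,y) − 2ε ). -/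
open Matrix
open scoped Kronecker Classical ComplexOrder

noncomputable section

/-- The sign value of a boolean output: `true ↦ +1`, `false ↦ −1`. -/
def signVal (b : Bool) : ℝ := if b then 1 else -1

/-- A finite-dimensional two-party entangled zero-communication protocol with abort,
with inputs from `X × Y` and outputs in `{−1,+1,⊥}` (encoded as `Option Bool`,
with `some true ↦ +1`, `some false ↦ −1`, `none ↦ ⊥`). -/
structure ZCProtocol (X Y : Type*) where
  dA : ℕ
  dB : ℕ
  ψ : Matrix (Fin dA × Fin dB) (Fin dA × Fin dB) ℂ
  ψ_psd : ψ.PosSemidef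
  ψ_trace : ψ.trace = 1
  M : X → Option Bool → Matrix (Fin dA) (Fin dA) ℂ
  M_psd : ∀ x a, (M x a).PosSemidef
  M_sum : ∀ x, ∑ a : Option Bool, M x a = 1
  N : Y → Option Bool → Matrix (Fin dB) (Fin dB) ℂ
  N_psd : ∀ y b, (N y b).PosSemidef
  N_sum : ∀ y, ∑ b : Option Bool, N y b = 1

/-- The correlation induced by a zero-communication protocol:
q(a,b|x,y) = Tr[(M_{a|x} ⊗ N_{b|y}) ψ]. -/
noncomputable def ZCProtocol.corr {X Y : Type*} (P : ZCProtocol X Y)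
    (x : X) (y : Y) (a b : Option Bool) : ℝ :=
  (((P.M x a ⊗ₖ P.N y b) * P.ψ).trace).re

/-- An abort-free entangled strategy for a two-player XOR game, outputs in `{−1,+1}`
encoded as `Bool`. -/
structure XorStrategy (X Y : Type*) where
  dA : ℕ
  dB : ℕ
  ψ : Matrix (Fin dA × Fin dB) (Fin dA × Fin dB) ℂ
  ψ_psd : ψ.PosSemidef
  ψ_trace : ψ.trace = 1
  M : X → Bool → Matrix (Fin dA) (Fin dA) ℂ
  M_psd : ∀ x a, (M x a).PosSemidef
  M_sum : ∀ x, ∑ a : Bool, M x a = 1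
  N : Y → Bool → Matrix (Fin dB) (Fin dB) ℂ
  N_psd : ∀ y b, (N y b).PosSemidef
  N_sum : ∀ y, ∑ b : Bool, N y b = 1

/-- The winning probability of a strategy in the XOR game G(p, V_{f'}). -/
noncomputable def XorStrategy.value {X Y : Type*} [Fintype X] [Fintype Y]
    (S : XorStrategy X Y) (f' : X → Y → ℝ) (p : X → Y → ℝ) : ℝ :=
  ∑ x, ∑ y, p x y * ∑ a : Bool, ∑ b : Bool,
    if signVal a * signVal b = f' x y
    then (((S.M x a ⊗ₖ S.N y b) * S.ψ).trace).re else 0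

/-- The entangled value ω*(G(p, V_{f'})) of the XOR game: the supremum of the winning
probabilities over all finite-dimensional entangled strategies. -/
noncomputable def xorGameValue {X Y : Type*} [Fintype X] [Fintype Y]
    (f' : X → Y → ℝ) (p : X → Y → ℝ) : ℝ :=
  sSup { r : ℝ | ∃ S : XorStrategy X Y, r = S.value f' p }

/-! Helper lemmas. -/

def cval {m n : ℕ} (ψ : Matrix (Fin m × Fin n) (Fin m × Fin n) ℂ)
    (A : Matrix (Fin m) (Fin m) ℂ) (B : Matrix (Fin n) (Fin n) ℂ) : ℝ :=
  (((A ⊗ₖ B) * ψ).trace).re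

theorem cval_add_left {m n : ℕ} (ψ : Matrix (Fin m × Fin n) (Fin m × Fin n) ℂ) (A A' B) :
    cval ψ (A + A') B = cval ψ A B + cval ψ A' B := by
  simp [cval, add_kronecker, add_mul]

theorem cval_add_right {m n : ℕ} (ψ : Matrix (Fin m × Fin n) (Fin m × Fin n) ℂ) (A B B') :
    cval ψ A (B + B') = cval ψ A B + cval ψ A B' := by
  simp [cval, kronecker_add, add_mul]

theorem cval_one {m n : ℕ} (ψ : Matrix (Fin m × Fin n) (Fin m × Fin n) ℂ) (h : ψ.trace = 1) :
    cval ψ 1 1 = 1 := by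
  simp [cval, h]

open scoped MatrixOrder in
theorem trace_mul_re_nonneg {n : Type*} [Fintype n] {A B : Matrix n n ℂ}
    (hA : A.PosSemidef) (hB : B.PosSemidef) : 0 ≤ ((A * B).trace).re := by
  obtain ⟨C, rfl⟩ := CStarAlgebra.nonneg_iff_eq_star_mul_self.mp hB.nonneg
  have h := (hA.mul_mul_conjTranspose_same C).trace_nonneg
  rw [star_eq_conjTranspose, ← mul_assoc, trace_mul_comm, ← mul_assoc]
  exact (Complex.nonneg_iff.mp h).1

theorem cval_nonneg {m n : ℕ} {ψ : Matrix (Fin m × Fin n) (Fin m × Fin n) ℂ} {A B}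
    (h : ψ.PosSemidef) (hA : A.PosSemidef) (hB : B.PosSemidef) : 0 ≤ cval ψ A B :=
  trace_mul_re_nonneg (hA.kronecker hB) h

theorem sum_if_sign (q : Bool → Bool → ℝ) (g : ℝ) (hg : g = 1 ∨ g = -1) :
    (∑ a : Bool, ∑ b : Bool, if signVal a * signVal b = g then q a b else 0) =
      ((∑ a : Bool, ∑ b : Bool, q a b) +
        g * (q true true + q false false - q true false - q false true)) / 2 := by
  have h1 : ¬ ((-1 : ℝ) = 1) := by norm_num
  have h2 : ¬ ((1 : ℝ) = -1) := by norm_num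
  rcases hg with rfl | rfl <;> simp [signVal, h1, h2] <;> ring

theorem XorStrategy.total {X Y : Type*} (S : XorStrategy X Y) (x : X) (y : Y) :
    ∑ a : Bool, ∑ b : Bool, cval S.ψ (S.M x a) (S.N y b) = 1 := by
  have h := cval_one S.ψ S.ψ_trace
  rw [← S.M_sum x, ← S.N_sum y] at h
  simp only [Fintype.sum_bool, cval_add_left, cval_add_right] at h ⊢
  linarith

theorem XorStrategy.value_le {X Y : Type*} [Fintype X] [Fintype Y]
    (S : XorStrategy X Y) (f' p : X → Y → ℝ) (hp0 : ∀ x y, 0 ≤ p x y)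
    (hp1 : ∑ x, ∑ y, p x y = 1) : S.value f' p ≤ 1 := by
  rw [← hp1]
  refine Finset.sum_le_sum fun x _ => Finset.sum_le_sum fun y _ => ?_
  refine mul_le_of_le_one_right (hp0 x y) ?_
  rw [← S.total x y]
  refine Finset.sum_le_sum fun a _ => Finset.sum_le_sum fun b _ => ?_
  have := cval_nonneg S.ψ_psd (S.M_psd x a) (S.N_psd y b)
  split_ifs
  · exact le_rfl
  · exact this

def halfM {n : ℕ} (A : Matrix (Fin n) (Fin n) ℂ) : Matrix (Fin n) (Fin n) ℂ := (1 / 2 : ℂ) • A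

theorem halfM_add {n : ℕ} (A : Matrix (Fin n) (Fin n) ℂ) : halfM A + halfM A = A := by
  rw [halfM, ← add_smul]; norm_num

theorem halfM_psd {n : ℕ} {A : Matrix (Fin n) (Fin n) ℂ} (h : A.PosSemidef) :
    (halfM A).PosSemidef := by
  refine h.smul ?_
  rw [Complex.nonneg_iff]; norm_num

def ZCProtocol.toXor {X Y : Type*} (P : ZCProtocol X Y) : XorStrategy X Y where
  dA := P.dA
  dB := P.dB
  ψ := P.ψ
  ψ_psd := P.ψ_psd
  ψ_trace := P.ψ_trace
  M x a := P.M x (some a) + halfM (P.M x none)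
  M_psd x a := (P.M_psd x _).add (halfM_psd (P.M_psd x _))
  M_sum x := by
    have h := P.M_sum x
    rw [Fintype.sum_option, Fintype.sum_bool] at h
    rw [Fintype.sum_bool, ← h]
    nth_rw 3 [← halfM_add (P.M x none)]
    abel
  N y b := P.N y (some b) + halfM (P.N y none)
  N_psd y b := (P.N_psd y _).add (halfM_psd (P.N_psd y _))
  N_sum y := by
    have h := P.N_sum y
    rw [Fintype.sum_option, Fintype.sum_bool] at h
    rw [Fintype.sum_bool, ← h]
    nth_rw 3 [← halfM_add (P.N y none)]
    abel

theorem ZCProtocol.toXor_win {X Y : Type*} (P : ZCProtocol X Y) (x : X) (y : Y)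
    (g : ℝ) (hg : g = 1 ∨ g = -1) :
    (∑ a : Bool, ∑ b : Bool, if signVal a * signVal b = g then
      cval P.toXor.ψ (P.toXor.M x a) (P.toXor.N y b) else 0) =
    (1 + g * (P.corr x y (some true) (some true) + P.corr x y (some false) (some false)
      - P.corr x y (some true) (some false) - P.corr x y (some false) (some true))) / 2 := by
  rw [sum_if_sign (fun a b => cval P.toXor.ψ (P.toXor.M x a) (P.toXor.N y b)) g hg,
    P.toXor.total x y]
  have hc : ∀ a b, P.corr x y a b = cval P.ψ (P.M x a) (P.N y b) := fun a b => rfl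
  simp only [hc, ZCProtocol.toXor, cval_add_left, cval_add_right]
  ring

/-- **Core game-value inequality** in the proof of the eff*-versus-γ₂ theorem. -/
theorem game_value_inequality
    {X Y : Type*} [Fintype X] [Nonempty X] [Fintype Y] [Nonempty Y]
    (f f' : X → Y → ℝ)
    (hf : ∀ x y, f x y = 1 ∨ f x y = -1)
    (hf' : ∀ x y, f' x y = 1 ∨ f' x y = -1)
    (p : X → Y → ℝ) (hp0 : ∀ x y, 0 ≤ p x y) (hp1 : ∑ x, ∑ y, p x y = 1)
    (ε : ℝ) (hε0 : 0 < ε) (hε1 : ε < 1)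
    (η : ℝ) (hη : 0 < η) (P : ZCProtocol X Y)
    (hnorm : ∀ x y, ∑ a : Bool, ∑ b : Bool, P.corr x y (some a) (some b) = η)
    (hsucc : ∑ x, ∑ y, p x y *
        (∑ a : Bool, ∑ b : Bool,
          if signVal a * signVal b = f x y then P.corr x y (some a) (some b) else 0)
        ≥ (1 - ε) * η) :
    2 * xorGameValue f' p - 1 ≥ η * ((∑ x, ∑ y, p x y * f x y * f' x y) - 2 * ε) := by
  have hbdd : BddAbove { r : ℝ | ∃ S : XorStrategy X Y, r = S.value f' p } :=
    ⟨1, by rintro r ⟨S, rfl⟩; exact S.value_le f' p hp0 hp1⟩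
  have hle : P.toXor.value f' p ≤ xorGameValue f' p := le_csSup hbdd ⟨P.toXor, rfl⟩
  have key : ∑ x, ∑ y, (p x y * (1 + η * (f x y * f' x y) - 2 * η) + 2 * (p x y *
        (∑ a : Bool, ∑ b : Bool,
          if signVal a * signVal b = f x y then P.corr x y (some a) (some b) else 0)))
      ≤ 2 * P.toXor.value f' p := by
    unfold XorStrategy.value
    simp only [Finset.mul_sum (s := (Finset.univ : Finset X)),
      Finset.mul_sum (s := (Finset.univ : Finset Y))]
    refine Finset.sum_le_sum fun x _ => Finset.sum_le_sum fun y _ => ?_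
    have h1 := P.toXor_win x y (f' x y) (hf' x y)
    unfold cval at h1
    rw [h1, sum_if_sign (fun a b => P.corr x y (some a) (some b)) _ (hf x y), hnorm]
    have hn := hnorm x y
    simp only [Fintype.sum_bool] at hn
    have hq : ∀ a b, 0 ≤ P.corr x y a b := fun a b =>
      cval_nonneg P.ψ_psd (P.M_psd x a) (P.N_psd y b)
    have q1 := hq (some true) (some true)
    have q2 := hq (some true) (some false)
    have q3 := hq (some false) (some true)
    have q4 := hq (some false) (some false)
    have := hp0 x y
    generalize P.corr x y (some true) (some true) = a at *
    generalize P.corr x y (some true) (some false) = b at *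
    generalize P.corr x y (some false) (some true) = c at *
    generalize P.corr x y (some false) (some false) = d at *
    have main : (1 + η * (f x y * f' x y) - 2 * η) + (η + f x y * (a + d - b - c))
        ≤ 1 + f' x y * (a + d - b - c) := by
      rcases hf x y with e | e <;> rcases hf' x y with e' | e' <;> rw [e, e'] <;> linarith
    have := mul_le_mul_of_nonneg_left main this
    linarith
  have e1 : ∑ x, ∑ y, (p x y * (1 + η * (f x y * f' x y) - 2 * η) + 2 * (p x y *
        (∑ a : Bool, ∑ b : Bool,
          if signVal a * signVal b = f x y then P.corr x y (some a) (some b) else 0)))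
      = (1 - 2 * η) * (∑ x, ∑ y, p x y) + η * (∑ x, ∑ y, p x y * f x y * f' x y)
        + 2 * ∑ x, ∑ y, p x y * (∑ a : Bool, ∑ b : Bool,
          if signVal a * signVal b = f x y then P.corr x y (some a) (some b) else 0) := by
    simp only [Finset.mul_sum (s := (Finset.univ : Finset X)),
      Finset.mul_sum (s := (Finset.univ : Finset Y)), ← Finset.sum_add_distrib]
    refine Finset.sum_congr rfl fun x _ => Finset.sum_congr rfl fun y _ => ?_
    ring
  rw [e1, hp1] at key
  linarith

end
end

section
/- Classical ℓ₁ decomposition lemma: Let A, B, R be finite types, let μ be a probability distribution on A × B × R, and let α, β be probability distributions on A and B respectively. Define ν on A × B × R by ν(a,b,r) = μ_{AR}(a,r)·μ_{BR}(b,r)/μ_R(r) when μ_R(r) > 0, and ν(a,b,r) = 0 when μ_R(r) = 0, where μ_{AR}, μ_{BR}, μ_R are the marginals of μ. Then ‖μ − ν‖₁ ≤ ‖μ − α ⊗ β ⊗ μ_R‖₁ + ‖μ_{BR} − β ⊗ μ_R‖₁ + ‖μ_{AR} − α ⊗ μ_R‖₁. -/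
open scoped Classical

/-- **Classical ℓ₁ decomposition lemma.**  Here `μR`, `μAR`, `μBR` are the marginals of `μ`
and `ν(a,b,r) = μAR(a,r)·μBR(b,r)/μR(r)` (and `0` when `μR(r) = 0`). -/
theorem l1_decomposition_lemma
    {A B R : Type*} [Fintype A] [Nonempty A] [Fintype B] [Nonempty B]
    [Fintype R] [Nonempty R]
    (μ : A × B × R → ℝ) (hμ0 : ∀ s, 0 ≤ μ s) (hμ1 : ∑ s, μ s = 1)
    (α : A → ℝ) (hα0 : ∀ a, 0 ≤ α a) (hα1 : ∑ a, α a = 1)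
    (β : B → ℝ) (hβ0 : ∀ b, 0 ≤ β b) (hβ1 : ∑ b, β b = 1) :
    let μR : R → ℝ := fun r => ∑ a, ∑ b, μ (a, b, r)
    let μAR : A → R → ℝ := fun a r => ∑ b, μ (a, b, r)
    let μBR : B → R → ℝ := fun b r => ∑ a, μ (a, b, r)
    let ν : A × B × R → ℝ := fun s =>
      if 0 < μR s.2.2 then μAR s.1 s.2.2 * μBR s.2.1 s.2.2 / μR s.2.2 else 0
    ∑ s : A × B × R, |μ s - ν s| ≤
      (∑ s : A × B × R, |μ s - α s.1 * β s.2.1 * μR s.2.2|) +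
      (∑ q : B × R, |μBR q.1 q.2 - β q.1 * μR q.2|) +
      (∑ q : A × R, |μAR q.1 q.2 - α q.1 * μR q.2|) := by
  intro μR μAR μBR ν
  have hB0 : ∀ b r, 0 ≤ μBR b r := fun b r => Finset.sum_nonneg fun a _ => hμ0 _
  have hR0 : ∀ r, 0 ≤ μR r := fun r =>
    Finset.sum_nonneg fun a _ => Finset.sum_nonneg fun b _ => hμ0 _
  have hBR : ∀ r, ∑ b, μBR b r = μR r := fun r => Finset.sum_comm
  have hw : ∀ r, ∑ b, μBR b r / μR r ≤ 1 := by
    intro r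
    rw [← Finset.sum_div, hBR]
    exact div_self_le_one _
  have key : ∀ s : A × B × R, |μ s - ν s| ≤ |μ s - α s.1 * β s.2.1 * μR s.2.2|
      + α s.1 * |μBR s.2.1 s.2.2 - β s.2.1 * μR s.2.2|
      + μBR s.2.1 s.2.2 / μR s.2.2 * |μAR s.1 s.2.2 - α s.1 * μR s.2.2| := by
    rintro ⟨a, b, r⟩
    have hν : ν (a, b, r) = if 0 < μR r then μAR a r * μBR b r / μR r else 0 := rfl
    rw [hν]
    dsimp only
    have hwn : 0 ≤ μBR b r / μR r := div_nonneg (hB0 b r) (hR0 r)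
    split_ifs with h
    · rw [← abs_of_nonneg (hα0 a), ← abs_of_nonneg hwn, ← abs_mul, ← abs_mul,
        abs_of_nonneg (hα0 a)]
      have e : μ (a, b, r) - μAR a r * μBR b r / μR r =
          (μ (a, b, r) - α a * β b * μR r) - α a * (μBR b r - β b * μR r)
          - μBR b r / μR r * (μAR a r - α a * μR r) := by
        field_simp
        ring
      rw [e]
      exact (abs_sub _ _).trans (add_le_add_left (abs_sub _ _) _)
    · have h0 : μR r = 0 := le_antisymm (not_lt.mp h) (hR0 r)
      have h1 := mul_nonneg (hα0 a) (abs_nonneg (μBR b r - β b * μR r))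
      simp only [h0, mul_zero, sub_zero, div_zero, zero_mul, add_zero] at h1 ⊢
      linarith
  refine (Finset.sum_le_sum fun s _ => key s).trans ?_
  rw [Finset.sum_add_distrib, Finset.sum_add_distrib]
  refine add_le_add (add_le_add le_rfl ?_) ?_
  · rw [Fintype.sum_prod_type]
    dsimp only
    simp_rw [← Finset.mul_sum]
    rw [← Finset.sum_mul, hα1, one_mul]
  · simp_rw [Fintype.sum_prod_type]
    refine Finset.sum_le_sum fun a _ => ?_
    rw [Finset.sum_comm]
    refine Finset.sum_le_sum fun r _ => ?_
    rw [← Finset.sum_mul]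
    exact mul_le_of_le_one_left (abs_nonneg _) (hw r)
end

section
/- Averaged Pinsker bound against a product reference: Let X₁, …, X_m and R be finite types, let Qᵢ be a probability distribution on Xᵢ for each i ∈ {1,…,m}, and let P be a probability distribution on (X₁ × ⋯ × X_m) × R that is absolutely continuous with respect to (Q₁ ⊗ ⋯ ⊗ Q_m) ⊗ P_R (i.e., P(x,r) > 0 implies Qᵢ(xᵢ) > 0 for every i). Then (1/m) · ∑_{i=1}^m ‖P_{XᵢR} − Qᵢ ⊗ P_R‖₁ ≤ √( (2/m) · D( P ‖ (Q₁ ⊗ ⋯ ⊗ Q_m) ⊗ P_R ) ), where P_{XᵢR} and P_R are the marginals of P on Xᵢ × R and R respectively. -/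
open scoped Classical

lemma hoeff_fin {X : Type*} [Fintype X] (Q s : X → ℝ) (hQ0 : ∀ x, 0 ≤ Q x)
    (hQ1 : ∑ x, Q x = 1) (hs : ∀ x, s x ∈ Set.Icc (-1 : ℝ) 1) (t : ℝ) :
    ∑ x, Q x * Real.exp (t * (s x - ∑ y, Q y * s y)) ≤ Real.exp (t ^ 2 / 2) := by
  letI : MeasurableSpace X := ⊤
  let p : PMF X := PMF.ofFintype (fun x => ENNReal.ofReal (Q x)) (by
    rw [← ENNReal.ofReal_sum_of_nonneg (fun x _ => hQ0 x), hQ1, ENNReal.ofReal_one])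
  have hint : ∀ f : X → ℝ, ∫ x, f x ∂p.toMeasure = ∑ x, Q x * f x := by
    intro f
    rw [PMF.integral_eq_sum]
    refine Finset.sum_congr rfl fun x _ => ?_
    simp [p, ENNReal.toReal_ofReal (hQ0 x)]
  have h := ProbabilityTheory.hasSubgaussianMGF_of_mem_Icc (μ := p.toMeasure) (X := s)
    (a := -1) (b := 1) (measurable_from_top.aemeasurable) (Filter.Eventually.of_forall hs)
  have h2 := h.mgf_le t
  rw [ProbabilityTheory.mgf, hint, hint] at h2
  refine h2.trans (le_of_eq ?_)
  congr 1
  norm_num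

/-- **Averaged Pinsker bound against a product reference.**  `PR` is the marginal of `P` on
`R`, `PiR i` is the marginal of `P` on `Xᵢ × R`, and `D` is the relative entropy (in nats)
of `P` from `(Q₁ ⊗ ⋯ ⊗ Q_m) ⊗ P_R`. -/
theorem averaged_pinsker_bound
    {m : ℕ} (hm : 0 < m)
    (X : Fin m → Type*) [∀ i, Fintype (X i)] [∀ i, Nonempty (X i)]
    {R : Type*} [Fintype R] [Nonempty R]
    (Q : ∀ i, X i → ℝ) (hQ0 : ∀ i xi, 0 ≤ Q i xi) (hQ1 : ∀ i, ∑ xi, Q i xi = 1)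
    (P : ((∀ i, X i) × R) → ℝ) (hP0 : ∀ s, 0 ≤ P s) (hP1 : ∑ s, P s = 1)
    (hac : ∀ (x : ∀ i, X i) (r : R), 0 < P (x, r) → ∀ i, 0 < Q i (x i)) :
    let PR : R → ℝ := fun r => ∑ x, P (x, r)
    let PiR : ∀ i : Fin m, X i → R → ℝ :=
      fun i xi r => ∑ x, if x i = xi then P (x, r) else 0
    let D : ℝ :=
      ∑ s, if 0 < P s then P s * Real.log (P s / ((∏ i, Q i (s.1 i)) * PR s.2)) else 0
    (1 / m) * ∑ i, ∑ xi, ∑ r, |PiR i xi r - Q i xi * PR r| ≤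
      Real.sqrt ((2 / m) * D) := by
  intro PR PiR D
  let s : ∀ i : Fin m, X i → R → ℝ := fun i xi r =>
    if 0 ≤ PiR i xi r - Q i xi * PR r then 1 else -1
  let S : ℝ := ∑ i, ∑ xi, ∑ r, |PiR i xi r - Q i xi * PR r|
  have hmR : (0 : ℝ) < m := by exact_mod_cast hm
  have hPR0 : ∀ r, 0 ≤ PR r := fun r => Finset.sum_nonneg fun x _ => hP0 _
  have hPRs : ∑ r, PR r = 1 := by
    rw [← hP1, Fintype.sum_prod_type_right]
  have hs : ∀ i xi r, s i xi r ∈ Set.Icc (-1 : ℝ) 1 := by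
    intro i xi r
    simp only [s]
    split_ifs <;> norm_num
  have hS0 : 0 ≤ S := Finset.sum_nonneg fun i _ => Finset.sum_nonneg fun _ _ =>
    Finset.sum_nonneg fun _ _ => abs_nonneg _
  let e : ∀ i : Fin m, R → ℝ := fun i r => ∑ y, Q i y * s i y r
  let f : ((∀ i, X i) × R) → ℝ := fun z => ∑ i, (s i (z.1 i) z.2 - e i z.2)
  -- expectation of the test function
  have hmarg : ∀ i r, ∑ x, P (x, r) * s i (x i) r = ∑ xi, PiR i xi r * s i xi r := by
    intro i r
    simp only [PiR, Finset.sum_mul]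
    rw [Finset.sum_comm]
    refine Finset.sum_congr rfl fun x _ => ?_
    simp [ite_mul]
  have hE : ∑ z, P z * f z = S := by
    have h1 : ∑ z, P z * f z
        = ∑ i, ∑ r, (∑ x, P (x, r) * s i (x i) r - PR r * e i r) := by
      rw [Fintype.sum_prod_type_right, Finset.sum_comm (s := (Finset.univ : Finset (Fin m)))]
      refine Finset.sum_congr rfl fun r _ => ?_
      simp only [f, Finset.mul_sum]
      rw [Finset.sum_comm]
      refine Finset.sum_congr rfl fun i _ => ?_
      simp only [mul_sub, Finset.sum_sub_distrib, PR, Finset.sum_mul]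
    rw [h1]
    refine Finset.sum_congr rfl fun i _ => ?_
    rw [Finset.sum_comm]
    refine Finset.sum_congr rfl fun r _ => ?_
    rw [hmarg]
    simp only [e, Finset.mul_sum]
    rw [← Finset.sum_sub_distrib]
    refine Finset.sum_congr rfl fun xi _ => ?_
    have : |PiR i xi r - Q i xi * PR r| = (PiR i xi r - Q i xi * PR r) * s i xi r := by
      simp only [s]
      split_ifs with h
      · rw [abs_of_nonneg h]; ring
      · rw [abs_of_neg (not_le.mp h)]; ring
    rw [this]; ring
  let W : ((∀ i, X i) × R) → ℝ := fun z => (∏ i, Q i (z.1 i)) * PR z.2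
  have hW0 : ∀ z, 0 ≤ W z := fun z =>
    mul_nonneg (Finset.prod_nonneg fun i _ => hQ0 _ _) (hPR0 _)
  have hmgf : ∀ t : ℝ, ∑ z, W z * Real.exp (t * f z) ≤ Real.exp (m * (t ^ 2 / 2)) := by
    intro t
    have h1 : ∑ z, W z * Real.exp (t * f z) = ∑ r, PR r *
        ∏ i, ∑ xi, Q i xi * Real.exp (t * (s i xi r - e i r)) := by
      rw [Fintype.sum_prod_type_right]
      refine Finset.sum_congr rfl fun r _ => ?_
      rw [Finset.prod_univ_sum, Fintype.piFinset_univ, Finset.mul_sum]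
      refine Finset.sum_congr rfl fun x _ => ?_
      simp only [W, f, Finset.mul_sum, Real.exp_sum, Finset.prod_mul_distrib]
      ring
    rw [h1]
    calc _ ≤ ∑ r, PR r * Real.exp (m * (t ^ 2 / 2)) := by
          refine Finset.sum_le_sum fun r _ => mul_le_mul_of_nonneg_left ?_ (hPR0 r)
          calc _ ≤ ∏ i : Fin m, Real.exp (t ^ 2 / 2) :=
                Finset.prod_le_prod
                  (fun i _ => Finset.sum_nonneg fun xi _ =>
                    mul_nonneg (hQ0 _ _) (Real.exp_pos _).le)
                  (fun i _ => hoeff_fin (Q i) (fun xi => s i xi r) (hQ0 i) (hQ1 i)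
                    (fun xi => hs i xi r) t)
            _ = _ := by simp [← Real.exp_nat_mul]
      _ = _ := by rw [← Finset.sum_mul, hPRs, one_mul]
  have key : ∀ t : ℝ, t * S - m * (t ^ 2 / 2) ≤ D := by
    intro t
    set c : ℝ := m * (t ^ 2 / 2) with hc
    have hpt : ∀ z, P z - Real.exp (-c) * (W z * Real.exp (t * f z)) + (t * (P z * f z) - c * P z)
        ≤ if 0 < P z then P z * Real.log (P z / W z) else 0 := by
      intro z
      split_ifs with h
      · have hW : 0 < W z := by
          refine mul_pos (Finset.prod_pos fun i _ => hac z.1 z.2 h i) ?_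
          exact lt_of_lt_of_le h (Finset.single_le_sum (f := fun x => P (x, z.2))
            (fun x _ => hP0 _) (Finset.mem_univ z.1))
        have h2 := Real.add_one_le_exp (t * f z - c - Real.log (P z / W z))
        have h3 : Real.exp (t * f z - c - Real.log (P z / W z))
            = Real.exp (-c) * Real.exp (t * f z) * (W z / P z) := by
          rw [Real.exp_sub, Real.exp_log (div_pos h hW), sub_eq_add_neg, Real.exp_add]
          field_simp
        rw [h3] at h2
        have h4 := mul_le_mul_of_nonneg_left h2 h.le
        have h5 : P z * (Real.exp (-c) * Real.exp (t * f z) * (W z / P z))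
            = Real.exp (-c) * (W z * Real.exp (t * f z)) := by
          field_simp
        rw [h5] at h4
        linarith
      · have h0 : P z = 0 := le_antisymm (not_lt.mp h) (hP0 z)
        rw [h0]
        have := mul_nonneg (Real.exp_pos (-c)).le (mul_nonneg (hW0 z) (Real.exp_pos (t * f z)).le)
        linarith
    have hsum := Finset.sum_le_sum (s := Finset.univ) fun z _ => hpt z
    rw [Finset.sum_add_distrib, Finset.sum_sub_distrib, Finset.sum_sub_distrib, ← Finset.mul_sum,
      ← Finset.mul_sum, ← Finset.mul_sum, hE, hP1] at hsum
    have h6 := mul_le_mul_of_nonneg_left (hmgf t) (Real.exp_pos (-c)).le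
    rw [← hc, ← Real.exp_add, neg_add_cancel, Real.exp_zero] at h6
    change _ ≤ D at hsum
    linarith
  have hk := key (S / m)
  refine Real.le_sqrt_of_sq_le ?_
  change (1 / m * S) ^ 2 ≤ _
  have h7 : S / m * S - m * ((S / m) ^ 2 / 2) = (1 / m * S) ^ 2 * (m / 2) := by
    field_simp; ring
  rw [h7] at hk
  have h8 := mul_le_mul_of_nonneg_left hk (div_pos two_pos hmR).le
  calc _ = 2 / (m : ℝ) * ((1 / m * S) ^ 2 * (m / 2)) := by field_simp
    _ ≤ _ := h8
end

section
/- Dimension bound for the relative min-entropy: For any finite nonempty types Y and Z and any quantum state ρ on Y × Z, there exists a quantum state σ_Z on Z such that ρ ≤ (min(|Y|, |Z|))² · (ρ_Y ⊗ σ_Z) in the Loewner order, where ρ_Y is the marginal of ρ on Y and |Y|, |Z| denote cardinalities. (Equivalently, inf over states σ_Z of D_∞(ρ_{YZ} ‖ ρ_Y ⊗ σ_Z) ≤ 2·min(log|Y|, log|Z|), where D_∞(ρ‖σ) = min{λ : ρ ≤ 2^λ σ}.) -/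
open Matrix
open scoped Kronecker Classical ComplexOrder

noncomputable section

/-- A quantum state: a positive semidefinite complex matrix with trace 1. -/
def IsState {S : Type*} [Fintype S] [DecidableEq S] (ρ : Matrix S S ℂ) : Prop :=
  ρ.PosSemidef ∧ ρ.trace = 1

/-- Marginal on the first factor (partial trace over the second factor). -/
noncomputable def margA {A B : Type*} [Fintype A] [Fintype B]
    (ρ : Matrix (A × B) (A × B) ℂ) : Matrix A A ℂ :=
  Matrix.of fun a a' => ∑ b, ρ (a, b) (a', b)

/-- Partial trace over the first factor, as a sum of diagonal blocks. -/
def mB {A B : Type*} [Fintype A] (τ : Matrix (A × B) (A × B) ℂ) : Matrix B B ℂ :=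
  ∑ a, τ.submatrix (fun z => (a, z)) (fun z => (a, z))

lemma mB_apply {A B : Type*} [Fintype A] (τ : Matrix (A × B) (A × B) ℂ) (z z' : B) :
    mB τ z z' = ∑ a, τ (a, z) (a, z') := by
  simp [mB, Matrix.sum_apply]

lemma psd_sum {ι n : Type*} [Fintype n] (s : Finset ι) (f : ι → Matrix n n ℂ)
    (h : ∀ i ∈ s, (f i).PosSemidef) : (∑ i ∈ s, f i).PosSemidef := by
  induction s using Finset.induction_on with
  | empty => simpa using PosSemidef.zero
  | insert a s ha ih =>
    rw [Finset.sum_insert ha]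
    exact (h a (by simp)).add (ih fun i hi => h i (by simp [hi]))

lemma mB_psd {A B : Type*} [Fintype A] [Fintype B] {τ : Matrix (A × B) (A × B) ℂ}
    (h : τ.PosSemidef) : (mB τ).PosSemidef :=
  psd_sum _ _ fun a _ => h.submatrix _

lemma mB_trace {A B : Type*} [Fintype A] [Fintype B] (τ : Matrix (A × B) (A × B) ℂ) :
    (mB τ).trace = τ.trace := by
  simp only [Matrix.trace, Matrix.diag_apply, mB_apply, Fintype.sum_prod_type]
  exact Finset.sum_comm

lemma pinch {A B : Type*} [Fintype A] [DecidableEq A] [Fintype B] [DecidableEq B]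
    {τ : Matrix (A × B) (A × B) ℂ} (h : τ.PosSemidef) :
    ((Fintype.card A : ℝ) • ((1 : Matrix A A ℂ) ⊗ₖ mB τ) - τ).PosSemidef := by
  let D : A → A → Matrix (A × B) (A × B) ℂ := fun a b =>
    diagonal fun p => (if p.1 = a then 1 else 0) - (if p.1 = b then 1 else 0)
  have h1 : ((2⁻¹ : ℝ) • ∑ a, ∑ b, D a b * τ * (D a b)ᴴ).PosSemidef :=
    (psd_sum _ _ fun a _ => psd_sum _ _ fun b _ => h.mul_mul_conjTranspose_same _).smul
      (by norm_num)
  have h2 : ((Fintype.card A : ℝ) • ∑ b, (diagonal (fun a : A => if a = b then (0 : ℂ) else 1)) ⊗ₖ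
      τ.submatrix (fun z => (b, z)) (fun z => (b, z))).PosSemidef := by
    refine (psd_sum _ _ fun b _ => PosSemidef.kronecker (PosSemidef.diagonal ?_)
      (h.submatrix _)).smul (by positivity)
    intro a
    dsimp
    split_ifs <;> simp
  convert h1.add h2 using 1
  ext ⟨p, z⟩ ⟨q, w⟩
  have e1 : ∀ a b, (D a b * τ * (D a b)ᴴ) (p, z) (q, w) =
      (((if p = a then 1 else 0) - (if p = b then 1 else 0)) *
      ((if q = a then 1 else 0) - (if q = b then 1 else 0))) * τ (p, z) (q, w) := by
    intro a b
    simp only [D, diagonal_conjTranspose, mul_diagonal, diagonal_mul]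
    simp only [Pi.star_apply, star_sub, apply_ite star, star_one, star_zero]
    ring
  simp only [Matrix.sub_apply, Matrix.add_apply, Matrix.smul_apply, Matrix.sum_apply, e1,
    kroneckerMap_apply, mB_apply, submatrix_apply, Complex.real_smul]
  simp only [← Finset.sum_mul]
  have e2 : (∑ a : A, ∑ b : A, (((if p = a then 1 else 0) - (if p = b then 1 else 0)) *
      ((if q = a then 1 else 0) - (if q = b then (1:ℂ) else 0)))) =
      2 * (Fintype.card A * (if p = q then 1 else 0) - 1) := by
    simp only [sub_mul, mul_sub, Finset.sum_sub_distrib, ← Finset.mul_sum, ← Finset.sum_mul]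
    simp [Finset.sum_ite_eq]
    split_ifs <;> ring
  rw [e2]
  by_cases hpq : p = q
  · subst hpq
    have e3 : ∑ b, (if p = b then (0:ℂ) else 1) * τ (b, z) (b, w)
        = ∑ b, τ (b, z) (b, w) - τ (p, z) (p, w) := by
      have : ∀ b, (if p = b then (0:ℂ) else 1) * τ (b, z) (b, w)
          = τ (b, z) (b, w) - if p = b then τ (b, z) (b, w) else 0 := by
        intro b; split_ifs <;> simp
      simp [this, Finset.sum_sub_distrib]
    simp only [diagonal_apply_eq, e3, one_apply_eq]
    push_cast
    simp
    ring
  · simp [hpq]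

lemma psd_half {n : Type*} [Fintype n] [DecidableEq n] {R : Matrix n n ℂ} (h : R.PosSemidef) :
    ∃ S M : Matrix n n ℂ, Sᴴ = S ∧ Mᴴ = M ∧ S * S = R ∧ S * M = M * S ∧ S * M * S = S ∧
      0 ≤ (Fintype.card n : ℂ) - (S * M).trace ∧ M * S * M = M := by
  obtain ⟨U, hU⟩ : ∃ U, U = (h.1.eigenvectorUnitary : Matrix n n ℂ) := ⟨_, rfl⟩
  have hUU : Uᴴ * U = 1 := by rw [hU]; exact Unitary.coe_star_mul_self _
  obtain ⟨l, hl⟩ : ∃ l, l = h.1.eigenvalues := ⟨_, rfl⟩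
  have hl0 : ∀ i, 0 ≤ l i := fun i => hl ▸ h.eigenvalues_nonneg i
  have hR : R = U * diagonal (fun i => (l i : ℂ)) * Uᴴ := by
    have := h.1.spectral_theorem
    rw [Unitary.conjStarAlgAut_apply] at this
    rw [hU, hl]
    exact this
  let C : (n → ℝ) → Matrix n n ℂ := fun d => U * diagonal (fun i => (d i : ℂ)) * Uᴴ
  have hC : ∀ d e, C d * C e = C (fun i => d i * e i) := by
    intro d e
    calc C d * C e = U * diagonal (fun i => (d i : ℂ)) * (Uᴴ * U) * diagonal (fun i => (e i : ℂ)) * Uᴴ := by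
          simp only [C, Matrix.mul_assoc]
      _ = _ := by
          rw [hUU]
          simp [C, Matrix.mul_assoc, ← Matrix.mul_assoc (diagonal _)]
  have hCs : ∀ d, (C d)ᴴ = C d := by
    intro d
    simp only [C, conjTranspose_mul, conjTranspose_conjTranspose, diagonal_conjTranspose,
      Matrix.mul_assoc]
    congr 3
    ext i
    simp
  have hCt : ∀ d, (C d).trace = ∑ i, (d i : ℂ) := by
    intro d
    simp only [C]
    rw [Matrix.trace_mul_comm, ← Matrix.mul_assoc, hUU, Matrix.one_mul, trace_diagonal]
  refine ⟨C fun i => √(l i), C fun i => (√(l i))⁻¹, hCs _, hCs _, ?_, ?_, ?_, ?_, ?_⟩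
  · rw [hC, hR]
    simp only [C, Real.mul_self_sqrt (hl0 _)]
  · simp only [hC, mul_comm]
  · simp only [hC, mul_inv_mul_cancel]
  · rw [hC, hCt, sub_nonneg]
    have : ∑ i, √(l i) * (√(l i))⁻¹ ≤ (Fintype.card n : ℝ) := by
      calc _ ≤ ∑ i : n, (1:ℝ) := Finset.sum_le_sum fun i _ => mul_inv_le_one
        _ = _ := by simp
    exact_mod_cast this
  · simp only [hC]
    congr 1
    ext i
    by_cases hi : √(l i) = 0 <;> simp [hi]

lemma margA_psd {A B : Type*} [Fintype A] [Fintype B] {τ : Matrix (A × B) (A × B) ℂ}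
    (h : τ.PosSemidef) : (margA τ).PosSemidef := by
  have : margA τ = ∑ b, τ.submatrix (fun z => (z, b)) (fun z => (z, b)) := by
    ext; simp [margA, Matrix.sum_apply]
  rw [this]
  exact psd_sum _ _ fun a _ => h.submatrix _

lemma trace_marg {A B : Type*} [Fintype A] [Fintype B] [DecidableEq B]
    (K : Matrix A A ℂ) (τ : Matrix (A × B) (A × B) ℂ) :
    ((K ⊗ₖ (1 : Matrix B B ℂ)) * τ).trace = (K * margA τ).trace := by
  simp only [Matrix.trace, Matrix.diag_apply, Matrix.mul_apply, Fintype.sum_prod_type,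
    kroneckerMap_apply, margA, of_apply, Matrix.one_apply, mul_ite, mul_one, mul_zero, ite_mul,
    zero_mul, Finset.sum_ite_eq, Finset.mem_univ, if_true, Finset.mul_sum]
  exact Finset.sum_congr rfl fun a _ => Finset.sum_comm

lemma case_Y {Y Z : Type*} [Fintype Y] [DecidableEq Y] [Nonempty Y]
    [Fintype Z] [DecidableEq Z] [Nonempty Z]
    (ρ : Matrix (Y × Z) (Y × Z) ℂ) (hρ : ρ.PosSemidef) :
    ∃ σZ : Matrix Z Z ℂ, IsState σZ ∧
      (((Fintype.card Y : ℝ) ^ 2) • (margA ρ ⊗ₖ σZ) - ρ).PosSemidef := by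
  obtain ⟨S, M, hS, hM, hSS, hcomm, hSMS, htr, hMSM⟩ := psd_half (margA_psd hρ)
  let I : Matrix Z Z ℂ := 1
  have hI : Iᴴ = I := conjTranspose_one
  have hkh : ∀ X : Matrix Y Y ℂ, (X ⊗ₖ I)ᴴ = Xᴴ ⊗ₖ I := by
    intro X; rw [conjTranspose_kronecker, hI]
  have hkm : ∀ X X' : Matrix Y Y ℂ, (X ⊗ₖ I) * (X' ⊗ₖ I) = (X * X') ⊗ₖ I := by
    intro X X'; rw [← mul_kronecker_mul]; simp [I]
  -- support
  have hPh : (1 - S * M)ᴴ = 1 - S * M := by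
    rw [conjTranspose_sub, conjTranspose_one, conjTranspose_mul, hS, hM, hcomm]
  have hK0 : ((1 - S * M) ⊗ₖ I) * ρ * ((1 - S * M) ⊗ₖ I)ᴴ = 0 := by
    rw [← (hρ.mul_mul_conjTranspose_same _).trace_eq_zero_iff, Matrix.trace_mul_comm,
      ← Matrix.mul_assoc, hkh, hPh, hkm, trace_marg, ← hSS]
    have : (1 - S * M) * S = 0 := by rw [Matrix.sub_mul, hSMS, Matrix.one_mul, sub_self]
    rw [Matrix.mul_assoc, ← Matrix.mul_assoc _ S S, this]
    simp
  have hKρ : ((1 - S * M) ⊗ₖ I) * ρ = 0 := by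
    obtain ⟨B, rfl⟩ : ∃ B : Matrix (Y × Z) (Y × Z) ℂ, ρ = B * Bᴴ := by
      obtain ⟨S', M', h1, h2, h3, -⟩ := psd_half hρ
      exact ⟨S', by rw [h1, h3]⟩
    have : (((1 - S * M) ⊗ₖ I) * B) * (((1 - S * M) ⊗ₖ I) * B)ᴴ = 0 := by
      rw [conjTranspose_mul, ← hK0]
      simp only [Matrix.mul_assoc]
    rw [self_mul_conjTranspose_eq_zero] at this
    rw [← Matrix.mul_assoc, this, Matrix.zero_mul]
  have hPρ : ((S * M) ⊗ₖ I) * ρ = ρ := by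
    have e : (S * M) ⊗ₖ I = 1 - (1 - S * M) ⊗ₖ I := by
      rw [eq_sub_iff_add_eq, ← add_kronecker, add_sub_cancel]
      exact one_kronecker_one
    rw [e, Matrix.sub_mul, hKρ, Matrix.one_mul, sub_zero]
  have hρP : ρ * ((M * S) ⊗ₖ I) = ρ := by
    have := congrArg conjTranspose hPρ
    rwa [conjTranspose_mul, hkh, conjTranspose_mul, hS, hM, hρ.1] at this
  obtain ⟨τ, hτ⟩ : ∃ τ, τ = (M ⊗ₖ I) * ρ * (M ⊗ₖ I)ᴴ := ⟨_, rfl⟩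
  have hτp : τ.PosSemidef := hτ ▸ hρ.mul_mul_conjTranspose_same _
  have hτρ : (S ⊗ₖ I) * τ * (S ⊗ₖ I)ᴴ = ρ := by
    rw [hτ, hkh, hkh, hS, hM]
    calc _ = ((S ⊗ₖ I) * (M ⊗ₖ I)) * ρ * ((M ⊗ₖ I) * (S ⊗ₖ I)) := by
          simp only [Matrix.mul_assoc]
      _ = ρ := by rw [hkm, hkm, hPρ, hρP]
  have hτt : τ.trace = (S * M).trace := by
    rw [hτ, Matrix.trace_mul_comm, ← Matrix.mul_assoc, hkh, hM, hkm, trace_marg, ← hSS]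
    have e : M * M * (S * S) = M * S := by
      calc M * M * (S * S) = M * (M * S) * S := by simp only [Matrix.mul_assoc]
        _ = M * (S * M) * S := by rw [hcomm]
        _ = (M * S * M) * S := by simp only [Matrix.mul_assoc]
        _ = M * S := by rw [hMSM]
    rw [e, hcomm]
  have hcY : (Fintype.card Y : ℂ) ≠ 0 := by simp
  have hcZ : (Fintype.card Z : ℂ) ≠ 0 := by simp
  have hcY' : (Fintype.card Y : ℝ) ≠ 0 := by simp
  obtain ⟨c, hc⟩ : ∃ c : ℂ, c = ((Fintype.card Y : ℂ) - (S * M).trace) * (Fintype.card Z : ℂ)⁻¹ :=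
    ⟨_, rfl⟩
  have hc0 : 0 ≤ c := by
    rw [hc]
    refine mul_nonneg htr ?_
    have : (0:ℝ) ≤ (Fintype.card Z : ℝ)⁻¹ := by positivity
    have h := Complex.zero_le_real.mpr this
    push_cast at h
    exact h
  have hcI : (c • I).PosSemidef := PosSemidef.one.smul hc0
  refine ⟨(Fintype.card Y : ℝ)⁻¹ • (mB τ + c • I), ⟨?_, ?_⟩, ?_⟩
  · exact ((mB_psd hτp).add hcI).smul (by positivity)
  · rw [trace_smul, trace_add, mB_trace, hτt, trace_smul, trace_one, hc, Complex.real_smul,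
      smul_eq_mul]
    push_cast
    field_simp
    ring
  · have h1 : (((Fintype.card Y : ℝ)) • ((1 : Matrix Y Y ℂ) ⊗ₖ (mB τ + c • I)) - τ).PosSemidef := by
      have := (pinch hτp).add ((PosSemidef.kronecker (PosSemidef.one (n := Y)) hcI).smul
        (Nat.cast_nonneg (α := ℝ) (Fintype.card Y)))
      convert this using 1
      rw [kronecker_add, smul_add]
      abel
    have h2 := h1.mul_mul_conjTranspose_same (S ⊗ₖ I)
    convert h2 using 1
    rw [Matrix.mul_sub, Matrix.sub_mul, hτρ, hkh, hS, kronecker_smul, smul_smul, Matrix.mul_smul,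
      Matrix.smul_mul, ← mul_kronecker_mul, ← mul_kronecker_mul, Matrix.mul_one, hSS]
    congr 2
    · field_simp
    · simp [I]

lemma case_Z {Y Z : Type*} [Fintype Y] [DecidableEq Y] [Nonempty Y]
    [Fintype Z] [DecidableEq Z] [Nonempty Z]
    (ρ : Matrix (Y × Z) (Y × Z) ℂ) (hρ : ρ.PosSemidef) :
    ∃ σZ : Matrix Z Z ℂ, IsState σZ ∧
      (((Fintype.card Z : ℝ) ^ 2) • (margA ρ ⊗ₖ σZ) - ρ).PosSemidef := by
  have hcZ : (Fintype.card Z : ℂ) ≠ 0 := by simp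
  refine ⟨(Fintype.card Z : ℝ)⁻¹ • 1, ⟨PosSemidef.one.smul (by positivity), ?_⟩, ?_⟩
  · rw [trace_smul, trace_one, Complex.real_smul]
    push_cast
    field_simp
  · have := (pinch (hρ.submatrix (Prod.swap : Z × Y → Y × Z))).submatrix (Prod.swap : Y × Z → Z × Y)
    convert this using 1
    ext ⟨y, z⟩ ⟨y', z'⟩
    simp only [Matrix.sub_apply, Matrix.smul_apply, kroneckerMap_apply, submatrix_apply, mB_apply,
      Prod.swap_prod_mk, margA, of_apply, Complex.real_smul]
    push_cast
    field_simp

/-- **Dimension bound for the relative min-entropy:** for any state ρ on Y × Z there is a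
state σ_Z on Z with ρ ≤ (min(|Y|,|Z|))² · (ρ_Y ⊗ σ_Z) in the Loewner order. -/
theorem dimension_bound_relative_min_entropy
    {Y Z : Type*} [Fintype Y] [DecidableEq Y] [Nonempty Y]
    [Fintype Z] [DecidableEq Z] [Nonempty Z]
    (ρ : Matrix (Y × Z) (Y × Z) ℂ) (hρ : IsState ρ) :
    ∃ σZ : Matrix Z Z ℂ, IsState σZ ∧
      ((((min (Fintype.card Y) (Fintype.card Z) : ℝ)) ^ 2) • (margA ρ ⊗ₖ σZ) - ρ).PosSemidef := by
  rcases le_total (Fintype.card Y : ℝ) (Fintype.card Z : ℝ) with h | h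
  · rw [min_eq_left h]
    exact case_Y ρ hρ.1
  · rw [min_eq_right h]
    exact case_Z ρ hρ.1

end
end

section
/- Message step for the relative min-entropy (inductive step in the bound on the final state of a communication protocol): Let X, F, M be finite nonempty types, let σ be a quantum state on X × F × M, let ρ_F be a quantum state on F, and let k ≥ 0 be a real number such that σ_{XF} ≤ 2^k · (σ_X ⊗ ρ_F) in the Loewner order, where σ_{XF} and σ_X are the marginals of σ on X × F and on X. Then there exists a quantum state ρ' on F × M such that σ ≤ 2^k · |M|² · (σ_X ⊗ ρ') in the Loewner order, where |M| is the cardinality of M. -/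
open Matrix
open scoped Kronecker Classical ComplexOrder

noncomputable section

theorem psd_diag_conj {S : Type*} [Fintype S] [DecidableEq S] (σ : Matrix S S ℂ)
    (h : σ.PosSemidef) (d : S → ℝ) :
    (Matrix.of fun i j => (d i : ℂ) * σ i j * (d j : ℂ)).PosSemidef := by
  have := h.conjTranspose_mul_mul_same (Matrix.diagonal fun i => (d i : ℂ))
  convert this using 1
  ext i j
  simp [Matrix.diagonal_conjTranspose, Matrix.diagonal_mul, Matrix.mul_diagonal]

theorem psd_rsmul {S : Type*} [Fintype S] [DecidableEq S] (σ : Matrix S S ℂ)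
    (h : σ.PosSemidef) (c : ℝ) (hc : 0 ≤ c) : (c • σ).PosSemidef := by
  have := h.smul (a := (c : ℂ)) (by exact_mod_cast hc)
  convert this using 1
  ext i j
  simp

/-- Block diagonal repetition. -/
theorem psd_block {S M : Type*} [Fintype S] [DecidableEq S] [Fintype M] [DecidableEq M]
    (H : Matrix S S ℂ) (h : H.PosSemidef) :
    (Matrix.of fun i j : S × M => if i.2 = j.2 then H i.1 j.1 else 0).PosSemidef := by
  have h2 := h.kronecker (Matrix.PosSemidef.one (n := M) (R := ℂ))
  have e : (Matrix.of fun i j : S × M => if i.2 = j.2 then H i.1 j.1 else 0)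
      = H ⊗ₖ (1 : Matrix M M ℂ) := by
    ext i j
    simp [Matrix.kroneckerMap_apply, Matrix.one_apply]
  rw [e]
  exact h2

theorem psd_partial {S M : Type*} [Fintype S] [DecidableEq S] [Fintype M] [DecidableEq M]
    (σ : Matrix (S × M) (S × M) ℂ) (h : σ.PosSemidef) :
    (Matrix.of fun i j : S × M =>
      (Fintype.card M : ℂ) * (if i.2 = j.2 then ∑ m, σ (i.1, m) (j.1, m) else 0)
        - σ i j).PosSemidef := by
  have h1 : (∑ m : M, ∑ n : M, Matrix.of fun i j : S × M =>
      (((if i.2 = m then 1 else 0) - (if i.2 = n then 1 else 0) : ℝ) : ℂ) * σ i j *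
      (((if j.2 = m then 1 else 0) - (if j.2 = n then 1 else 0) : ℝ) : ℂ)).PosSemidef :=
    Matrix.posSemidef_sum _ fun m _ => Matrix.posSemidef_sum _ fun n _ =>
      psd_diag_conj σ h _
  have h2 : (∑ n : M, Matrix.of fun i j : S × M => if i.2 = j.2 then
      (∑ m : M, if i.2 = m then 0 else (σ.submatrix (fun i : S × M => (i.1, m))
        (fun i : S × M => (i.1, m)) i j)) * (if i.2 = n then 1 else 0) else 0).PosSemidef := by
    refine Matrix.posSemidef_sum _ fun n _ => ?_
    have : (∑ m : M, if n = m then 0 else Matrix.of fun i j : S × M =>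
      (((if i.2 = n then 1 else 0) : ℝ) : ℂ) * (σ.submatrix (fun i : S × M => (i.1, m))
        (fun i : S × M => (i.1, m)) i j) *
      (((if j.2 = n then 1 else 0) : ℝ) : ℂ)).PosSemidef := by
      refine Matrix.posSemidef_sum _ fun m _ => ?_
      split_ifs
      · exact Matrix.PosSemidef.zero
      · exact psd_diag_conj _ (h.submatrix _) _
    convert this using 1
    ext ⟨s, i⟩ ⟨t, j⟩
    simp only [Matrix.sum_apply, Matrix.of_apply, Matrix.submatrix_apply]
    by_cases hij : i = j
    · subst hij
      by_cases hn : i = n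
      · subst hn
        simp only [if_true, mul_one]
        refine Finset.sum_congr rfl fun m _ => ?_
        by_cases hm : i = m <;> simp [hm]
      · simp only [hn, if_true, if_false, mul_zero]
        refine (Finset.sum_eq_zero fun m _ => ?_).symm
        by_cases hm : n = m
        · simp [hm]
        · simp [hm, hn]
    · simp only [hij, if_false]
      refine (Finset.sum_eq_zero fun m _ => ?_).symm
      by_cases hm : n = m
      · simp [hm]
      · by_cases hn : i = n
        · have : j ≠ n := fun h => hij (hn.trans h.symm)
          simp [hm, this]
        · simp [hm, hn]
  have h3 := (psd_rsmul _ h1 (1/2) (by norm_num)).add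
    (psd_rsmul _ h2 (Fintype.card M) (by positivity))
  convert h3 using 1
  ext ⟨s, i⟩ ⟨t, j⟩
  simp only [Matrix.add_apply, Matrix.smul_apply, Matrix.sum_apply, Matrix.of_apply,
    Matrix.submatrix_apply, Complex.real_smul]
  have key : ∑ m : M, ∑ n : M,
      (((if i = m then 1 else 0) - (if i = n then 1 else 0) : ℝ) : ℂ) * σ (s, i) (t, j) *
      (((if j = m then 1 else 0) - (if j = n then 1 else 0) : ℝ) : ℂ)
      = (2 * (Fintype.card M : ℂ) * (if i = j then 1 else 0) - 2) * σ (s, i) (t, j) := by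
    have e : ∀ m n : M, (((if i = m then 1 else 0) - (if i = n then 1 else 0) : ℝ) : ℂ) *
      σ (s, i) (t, j) * (((if j = m then 1 else 0) - (if j = n then 1 else 0) : ℝ) : ℂ)
      = σ (s, i) (t, j) * ((if i = m then (if j = m then 1 else 0) else 0)
        + (if i = n then (if j = n then 1 else 0) else 0)
        - (if i = m then 1 else 0) * (if j = n then 1 else 0)
        - (if i = n then 1 else 0) * (if j = m then 1 else 0)) := by
      intro m n
      split_ifs <;> simp
    simp only [e, ← Finset.mul_sum, Finset.sum_add_distrib, Finset.sum_sub_distrib]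
    simp [← Finset.sum_mul, ← Finset.mul_sum, eq_comm]
    split_ifs <;> ring
  rw [key]
  by_cases hij : i = j
  · subst hij
    have e2 : ∑ m : M, σ (s, m) (t, m)
        = σ (s, i) (t, i) + ∑ m : M, if i = m then 0 else σ (s, m) (t, m) := by
      rw [← Fintype.sum_ite_eq i (fun m => σ (s, m) (t, m)), ← Finset.sum_add_distrib]
      refine Finset.sum_congr rfl fun m _ => ?_
      split_ifs <;> simp
    simp only [if_true, e2, ← Finset.mul_sum]
    simp
    ring
  · simp [hij]

/-- **Message step for the relative min-entropy** (inductive step in the bound on the final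
state of a communication protocol).  Here `σ` is a state on `X × F × M`, its marginal on
`X × F` is written out explicitly by tracing out `M`, and `margA σ` is its marginal on `X`. -/
theorem message_step_relative_min_entropy
    {X F M : Type*} [Fintype X] [DecidableEq X] [Nonempty X]
    [Fintype F] [DecidableEq F] [Nonempty F]
    [Fintype M] [DecidableEq M] [Nonempty M]
    (σ : Matrix (X × F × M) (X × F × M) ℂ) (ρF : Matrix F F ℂ) (k : ℝ)
    (hσ : IsState σ) (hρF : IsState ρF) (hk : 0 ≤ k)
    (hsub : (((2 : ℝ) ^ k) • (margA σ ⊗ₖ ρF) -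
        Matrix.of (fun p q : X × F => ∑ m, σ (p.1, p.2, m) (q.1, q.2, m))).PosSemidef) :
    ∃ ρ' : Matrix (F × M) (F × M) ℂ, IsState ρ' ∧
      ((((2 : ℝ) ^ k) * (Fintype.card M : ℝ) ^ 2) • (margA σ ⊗ₖ ρ') - σ).PosSemidef := by
  have hc : (Fintype.card M : ℂ) ≠ 0 := by exact_mod_cast Fintype.card_ne_zero
  refine ⟨((Fintype.card M : ℝ)⁻¹) • (ρF ⊗ₖ (1 : Matrix M M ℂ)), ⟨?_, ?_⟩, ?_⟩
  · exact psd_rsmul _ (hρF.1.kronecker Matrix.PosSemidef.one) _ (by positivity)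
  · rw [Matrix.trace_smul, Matrix.trace_kronecker, hρF.2, Matrix.trace_one]
    simp [hc]
  · have h1 := psd_rsmul _ ((psd_block (M := M) _ hsub).submatrix
      (fun i : X × F × M => ((i.1, i.2.1), i.2.2))) (Fintype.card M) (by positivity)
    have h2 := (psd_partial (σ.submatrix (fun i : (X × F) × M => (i.1.1, i.1.2, i.2))
      (fun i : (X × F) × M => (i.1.1, i.1.2, i.2))) (hσ.1.submatrix _)).submatrix
      (fun i : X × F × M => ((i.1, i.2.1), i.2.2))
    convert h1.add h2 using 1
    ext ⟨x, f, i⟩ ⟨y, g, j⟩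
    by_cases hij : i = j
    · subst hij
      simp
      field_simp
      ring
    · simp [hij]

end
end

section
/- Divergence bound after conditioning on a success event: Let X₁, …, X_n and 𝒜 be finite nonempty types, let Qᵢ be a probability distribution on Xᵢ for each i, and let P be a probability distribution on (X₁ × ⋯ × X_n) × 𝒜 whose marginal on X₁ × ⋯ × X_n equals the product Q₁ ⊗ ⋯ ⊗ Q_n. Let E be a subset of (X₁ × ⋯ × X_n) × 𝒜 with P(E) = γ > 0, let P' be P conditioned on E, and let C ⊆ {1,…,n}. Writing R = ((Xᵢ)_{i ∈ C}, 𝒜) for the combined register consisting of the coordinates in C together with 𝒜, we have D( P'_{X_{C̄} R} ‖ (⊗_{i ∉ C} Qᵢ) ⊗ P'_R ) ≤ ln|𝒜| + ln(1/γ), where X_{C̄} denotes the coordinates outside C and D is relative entropy in nats. -/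
open scoped Classical

theorem marg_aux {n : ℕ} (X : Fin n → Type*) [∀ i, Fintype (X i)]
    (Q : ∀ i, X i → ℝ) (hQ1 : ∀ i, ∑ xi, Q i xi = 1) (C : Finset (Fin n)) (x : ∀ i, X i) :
    (∑ y : ∀ i, X i, if (∀ i ∈ C, x i = y i) then ∏ i, Q i (y i) else 0)
      = ∏ i ∈ C, Q i (x i) := by
  have h1 : ∀ y : ∀ i, X i, (if (∀ i ∈ C, x i = y i) then ∏ i, Q i (y i) else 0)
      = ∏ i, (if i ∈ C then (if x i = y i then Q i (y i) else 0) else Q i (y i)) := by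
    intro y
    split_ifs with h
    · refine Finset.prod_congr rfl fun i _ => ?_
      by_cases hi : i ∈ C
      · simp [hi, h i hi]
      · simp [hi]
    · push Not at h
      obtain ⟨i, hi, hne⟩ := h
      exact (Finset.prod_eq_zero (Finset.mem_univ i) (by simp [hi, hne])).symm
  rw [Finset.sum_congr rfl fun y _ => h1 y]
  rw [← Fintype.prod_sum (fun i (z : X i) =>
    (if i ∈ C then (if x i = z then Q i z else 0) else Q i z))]
  have h2 : ∀ i, (∑ z : X i, (if i ∈ C then (if x i = z then Q i z else 0) else Q i z))
      = if i ∈ C then Q i (x i) else 1 := by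
    intro i
    by_cases hi : i ∈ C
    · simp [hi]
    · simp [hi, hQ1]
  rw [Finset.prod_congr rfl fun i _ => h2 i]
  simp

/-- **Divergence bound after conditioning on a success event.**
`P'` is `P` conditioned on the event `E` (of probability `γ`), and `PR'` evaluated at
`(x, a)` is the marginal of `P'` on the combined register `R = ((Xᵢ)_{i ∈ C}, 𝒜)`,
evaluated at the `C`-coordinates of `x` together with `a`.  The left-hand side is the
relative entropy (in nats) of the distribution `P'`, viewed on `X_{C̄} × R`, from
`(⊗_{i ∉ C} Qᵢ) ⊗ P'_R`. -/
theorem divergence_after_conditioning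
    {n : ℕ} (X : Fin n → Type*) [∀ i, Fintype (X i)] [∀ i, Nonempty (X i)]
    {A : Type*} [Fintype A] [Nonempty A]
    (Q : ∀ i, X i → ℝ) (hQ0 : ∀ i xi, 0 ≤ Q i xi) (hQ1 : ∀ i, ∑ xi, Q i xi = 1)
    (P : ((∀ i, X i) × A) → ℝ) (hP0 : ∀ s, 0 ≤ P s) (hP1 : ∑ s, P s = 1)
    (hmarg : ∀ x : ∀ i, X i, (∑ a, P (x, a)) = ∏ i, Q i (x i))
    (E : Set ((∀ i, X i) × A)) (γ : ℝ) (hγ : 0 < γ)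
    (hPE : ∑ s, (if s ∈ E then P s else 0) = γ)
    (C : Finset (Fin n)) :
    let P' : ((∀ i, X i) × A) → ℝ := fun s => if s ∈ E then P s / γ else 0
    let PR' : ((∀ i, X i) × A) → ℝ :=
      fun s => ∑ x, if (∀ i ∈ C, x i = s.1 i) then P' (x, s.2) else 0
    (∑ s, if 0 < P' s then
        P' s * Real.log (P' s / ((∏ i ∈ Cᶜ, Q i (s.1 i)) * PR' s)) else 0) ≤
      Real.log (Fintype.card A) + Real.log (1 / γ) := by
  intro P' PR'
  have hP'0 : ∀ s, 0 ≤ P' s := by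
    intro s
    simp only [P']
    split_ifs
    · exact div_nonneg (hP0 s) hγ.le
    · exact le_rfl
  have hP'1 : ∑ s, P' s = 1 := by
    have : ∀ s, P' s = (if s ∈ E then P s else 0) / γ := by
      intro s
      simp only [P']
      split_ifs <;> simp
    rw [Finset.sum_congr rfl fun s _ => this s, ← Finset.sum_div, hPE, div_self hγ.ne']
  have hPR0 : ∀ s, 0 ≤ PR' s := by
    intro s
    refine Finset.sum_nonneg fun x _ => ?_
    split_ifs
    · exact hP'0 _
    · exact le_rfl
  have hPR : ∀ s, P' s ≤ PR' s := by
    intro s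
    have := Finset.single_le_sum
      (f := fun x => if (∀ i ∈ C, x i = s.1 i) then P' (x, s.2) else 0)
      (fun x _ => by
        split_ifs
        · exact hP'0 _
        · exact le_rfl) (Finset.mem_univ s.1)
    simpa using this
  have hPQ : ∀ s, P' s ≤ (∏ i, Q i (s.1 i)) / γ := by
    intro s
    have h1 : P s ≤ ∏ i, Q i (s.1 i) := by
      rw [← hmarg]
      exact Finset.single_le_sum (f := fun a => P (s.1, a)) (fun a _ => hP0 _)
        (Finset.mem_univ s.2)
    have h2 : 0 ≤ ∏ i, Q i (s.1 i) := (hP0 s).trans h1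
    simp only [P']
    split_ifs
    · gcongr
    · positivity
  have hQs : ∑ y : ∀ i, X i, ∏ i, Q i (y i) = 1 := by
    rw [← Fintype.prod_sum]
    simp [hQ1]
  have hcard : (0 : ℝ) < Fintype.card A := by exact_mod_cast Fintype.card_pos
  -- the key sum
  have key : ∑ s, P' s * ((∏ i ∈ C, Q i (s.1 i)) / PR' s) ≤ Fintype.card A := by
    rw [Fintype.sum_prod_type_right]
    have : ∀ a, ∑ x, P' (x, a) * ((∏ i ∈ C, Q i (x i)) / PR' (x, a)) ≤ 1 := by
      intro a
      calc ∑ x, P' (x, a) * ((∏ i ∈ C, Q i (x i)) / PR' (x, a))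
          = ∑ x, ∑ y : ∀ i, X i, (∏ i, Q i (y i)) *
              ((if (∀ i ∈ C, x i = y i) then P' (x, a) else 0) / PR' (y, a)) := by
            refine Finset.sum_congr rfl fun x _ => ?_
            rw [← marg_aux X Q hQ1 C x, Finset.sum_div, Finset.mul_sum]
            refine Finset.sum_congr rfl fun y _ => ?_
            split_ifs with h
            · have : PR' (x, a) = PR' (y, a) := by
                refine Finset.sum_congr rfl fun z _ => ?_
                have : (∀ i ∈ C, z i = x i) ↔ (∀ i ∈ C, z i = y i) :=
                  forall₂_congr fun i hi => by rw [h i hi]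
                simp only [this]
              rw [this]
              ring
            · simp
        _ = ∑ y : ∀ i, X i, (∏ i, Q i (y i)) * (PR' (y, a) / PR' (y, a)) := by
            rw [Finset.sum_comm]
            refine Finset.sum_congr rfl fun y _ => ?_
            rw [← Finset.mul_sum, ← Finset.sum_div]
        _ ≤ ∑ y : ∀ i, X i, ∏ i, Q i (y i) := by
            refine Finset.sum_le_sum fun y _ => ?_
            exact mul_le_of_le_one_right (Finset.prod_nonneg fun i _ => hQ0 i _)
              (div_self_le_one _)
        _ = 1 := hQs
    calc _ ≤ ∑ a : A, (1 : ℝ) := Finset.sum_le_sum fun a _ => this a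
      _ = _ := by simp
  have term : ∀ s, (if 0 < P' s then
        P' s * Real.log (P' s / ((∏ i ∈ Cᶜ, Q i (s.1 i)) * PR' s)) else 0) ≤
      P' s * (Real.log (Fintype.card A) + Real.log (1 / γ) - 1) +
        P' s * ((∏ i ∈ C, Q i (s.1 i)) / PR' s) / Fintype.card A := by
    intro s
    split_ifs with h
    · have hR : 0 < PR' s := h.trans_le (hPR s)
      have hQQ : (∏ i ∈ C, Q i (s.1 i)) * (∏ i ∈ Cᶜ, Q i (s.1 i)) = ∏ i, Q i (s.1 i) :=
        Finset.prod_mul_prod_compl C _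
      have h1 := hPQ s
      have hpos : 0 < ∏ i, Q i (s.1 i) := by
        have := h.trans_le h1
        by_contra hc
        exact absurd this (not_lt.2 (div_nonpos_of_nonpos_of_nonneg (not_lt.1 hc) hγ.le))
      rw [← hQQ] at h1 hpos
      have hC0 : 0 ≤ ∏ i ∈ C, Q i (s.1 i) := Finset.prod_nonneg fun i _ => hQ0 i _
      have hD0 : 0 ≤ ∏ i ∈ Cᶜ, Q i (s.1 i) := Finset.prod_nonneg fun i _ => hQ0 i _
      generalize (∏ i ∈ C, Q i (s.1 i)) = c at *
      generalize (∏ i ∈ Cᶜ, Q i (s.1 i)) = d at *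
      have hc : 0 < c := pos_of_mul_pos_left hpos hD0
      have hd : 0 < d := pos_of_mul_pos_right hpos hC0
      generalize PR' s = r at *
      generalize P' s = p at *
      generalize (Fintype.card A : ℝ) = k at *
      have e1 : p / (d * r) ≤ k * (1 / γ) * (c / r / k) := by
        rw [div_le_iff₀ (by positivity)]
        refine h1.trans (le_of_eq ?_)
        field_simp
      have e2 : Real.log (p / (d * r)) ≤ Real.log k + Real.log (1 / γ) + (c / r / k - 1) := by
        refine (Real.log_le_log (by positivity) e1).trans ?_
        rw [Real.log_mul (by positivity) (by positivity),
          Real.log_mul (by positivity) (by positivity)]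
        have := Real.log_le_sub_one_of_pos (show 0 < c / r / k by positivity)
        linarith
      calc _ ≤ p * (Real.log k + Real.log (1 / γ) + (c / r / k - 1)) :=
            mul_le_mul_of_nonneg_left e2 h.le
        _ = _ := by ring
    · have : P' s = 0 := le_antisymm (not_lt.1 h) (hP'0 s)
      simp [this]
  refine (Finset.sum_le_sum fun s _ => term s).trans ?_
  rw [Finset.sum_add_distrib, ← Finset.sum_mul, hP'1, ← Finset.sum_div]
  have := (div_le_one hcard).2 key
  linarith
end

section
/- Average ℓ₁ closeness of single coordinates after conditioning (classical form of condition 1 of the key lemma of the direct product theorem): Let X₁, …, X_n and 𝒜 be finite nonempty types, let Qᵢ be a probability distribution on Xᵢ for each i, and let P be a probability distribution on (X₁ × ⋯ × X_n) × 𝒜 whose marginal on X₁ × ⋯ × X_n equals the product Q₁ ⊗ ⋯ ⊗ Q_n. Let E be a subset of (X₁ × ⋯ × X_n) × 𝒜 with P(E) = γ > 0, let P' be P conditioned on E, and let C ⊆ {1,…,n} with |C| ≤ n/2. Writing R = ((Xᵢ)_{i ∈ C}, 𝒜) for the combined register consisting of the coordinates in C together with 𝒜, and δ = (ln|𝒜|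 + ln(1/γ))/n, we have (1/(n − |C|)) · ∑_{i ∉ C} ‖P'_{Xᵢ R} − Qᵢ ⊗ P'_R‖₁ ≤ 2·√δ. -/
open scoped Classical


lemma pk_log_bound {t : ℝ} (ht : 0 < t) : (t-1)*(5*t+1)/(2*t*(t+2)) ≤ Real.log t := by
  let f : ℝ → ℝ := fun t => Real.log t - (t-1)*(5*t+1)/(2*t*(t+2))
  have hd : ∀ s : ℝ, 0 < s → HasDerivAt f ((s-1)^3/(s^2*(s+2)^2)) s := by
    intro s hs
    have hne : 2*s*(s+2) ≠ 0 := by positivity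
    have h1 := ((hasDerivAt_id' s).sub_const 1).mul (((hasDerivAt_id' s).const_mul 5).add_const 1)
    have h2 := ((hasDerivAt_id' s).const_mul 2).mul ((hasDerivAt_id' s).add_const 2)
    have h3 := (Real.hasDerivAt_log hs.ne').sub (h1.div h2 hne)
    refine h3.congr_deriv ?_
    simp only [Pi.mul_apply]
    field_simp
    ring
  have h1 : f 1 = 0 := by simp [f]
  suffices h : 0 ≤ f t by simp only [f] at h; linarith
  rw [← h1]
  rcases le_total t 1 with h | h
  · have : AntitoneOn f (Set.Icc t 1) := by
      apply antitoneOn_of_deriv_nonpos (convex_Icc t 1)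
      · exact fun s hs => (hd s (ht.trans_le hs.1)).continuousAt.continuousWithinAt
      · intro s hs
        rw [interior_Icc] at hs
        exact (hd s (ht.trans hs.1)).differentiableAt.differentiableWithinAt
      · intro s hs
        rw [interior_Icc] at hs
        rw [(hd s (ht.trans hs.1)).deriv]
        apply div_nonpos_of_nonpos_of_nonneg
        · have : 0 ≤ (1-s)^3 := pow_nonneg (by linarith [hs.2]) 3
          nlinarith
        · positivity
    exact this ⟨le_rfl, h⟩ ⟨h, le_rfl⟩ h
  · have : MonotoneOn f (Set.Icc 1 t) := by
      apply monotoneOn_of_deriv_nonneg (convex_Icc 1 t)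
      · exact fun s hs => (hd s (one_pos.trans_le hs.1)).continuousAt.continuousWithinAt
      · intro s hs
        rw [interior_Icc] at hs
        exact (hd s (one_pos.trans hs.1)).differentiableAt.differentiableWithinAt
      · intro s hs
        rw [interior_Icc] at hs
        rw [(hd s (one_pos.trans hs.1)).deriv]
        apply div_nonneg
        · exact pow_nonneg (by linarith [hs.1]) 3
        · positivity
    exact this ⟨le_rfl, h⟩ ⟨h, le_rfl⟩ h

lemma pk_pointwise {p q : ℝ} (hp : 0 ≤ p) (hq : 0 ≤ q) (h : q = 0 → p = 0) :
    3*(p-q)^2 ≤ (2*p+4*q)*(p*Real.log (p/q) - p + q) := by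
  rcases hq.eq_or_lt with h0 | hq
  · have := h h0.symm
    subst this; subst h0; simp
  rcases hp.eq_or_lt with h0 | hp
  · subst h0; simp; nlinarith
  have := pk_log_bound (div_pos hp hq)
  have e : (p/q-1)*(5*(p/q)+1)/(2*(p/q)*(p/q+2)) = (p-q)*(5*p+q)/(2*p*(p+2*q)) := by
    field_simp
  rw [e, div_le_iff₀ (by positivity)] at this
  nlinarith

lemma pk_pinsker {ι : Type*} [Fintype ι] (p q : ι → ℝ) (hp : ∀ i, 0 ≤ p i) (hq : ∀ i, 0 ≤ q i)
    (h : ∀ i, q i = 0 → p i = 0) (hp1 : ∑ i, p i = 1) (hq1 : ∑ i, q i = 1) :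
    (∑ i, |p i - q i|)^2 ≤ 2 * ∑ i, p i * Real.log (p i / q i) := by
  have hpt := fun i => pk_pointwise (hp i) (hq i) (h i)
  have hg : ∀ i, 0 ≤ p i * Real.log (p i / q i) - p i + q i := by
    intro i
    rcases (hq i).eq_or_lt with h0 | h0
    · rw [h i h0.symm, ← h0]; simp
    · by_contra hc
      push Not at hc
      have := hpt i
      nlinarith [sq_nonneg (p i - q i), hp i, mul_pos (show 0 < 2*p i+4*q i by linarith [hp i]) (neg_pos.2 hc)]
  have key : (∑ i, |p i - q i|)^2 ≤ (∑ i, (2*p i+4*q i)/3) * ∑ i, (p i * Real.log (p i / q i) - p i + q i) := by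
    calc (∑ i, |p i - q i|)^2 
        ≤ (∑ i, Real.sqrt ((2*p i+4*q i)/3) * Real.sqrt (p i * Real.log (p i / q i) - p i + q i))^2 := by
          apply pow_le_pow_left₀ (Finset.sum_nonneg fun i _ => abs_nonneg _)
          apply Finset.sum_le_sum
          intro i _
          rw [← Real.sqrt_mul (by linarith [hp i, hq i]), ← Real.sqrt_sq_eq_abs]
          apply Real.sqrt_le_sqrt
          linarith [hpt i]
      _ ≤ (∑ i, Real.sqrt ((2*p i+4*q i)/3)^2) * ∑ i, Real.sqrt (p i * Real.log (p i / q i) - p i + q i)^2 :=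
          Finset.sum_mul_sq_le_sq_mul_sq _ _ _
      _ = _ := by
          congr 1
          · exact Finset.sum_congr rfl fun i _ => Real.sq_sqrt (by linarith [hp i, hq i])
          · exact Finset.sum_congr rfl fun i _ => Real.sq_sqrt (hg i)
  rw [← Finset.sum_div, Finset.sum_add_distrib, Finset.sum_add_distrib, Finset.sum_sub_distrib,
    ← Finset.mul_sum, ← Finset.mul_sum, hp1, hq1] at key
  linarith

lemma pk_sumprod {n : ℕ} (X : Fin n → Type*) [∀ i, Fintype (X i)] (C : Finset (Fin n))
    (Q : ∀ i, X i → ℝ) (hQ0 : ∀ i xi, 0 ≤ Q i xi) (hQ1 : ∀ i, ∑ xi, Q i xi = 1)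
    (G : ∀ i, X i → (∀ i : {i // i ∈ C}, X i.1) → ℝ) (hG0 : ∀ i xi u, 0 ≤ G i xi u)
    (hG1 : ∀ i ∉ C, ∀ u, ∑ xi, G i xi u ≤ 1) :
    ∑ x : ∀ i, X i, (∏ i ∈ C, Q i (x i)) * ∏ i ∈ Cᶜ, G i (x i) (fun j => x j.1) ≤ 1 := by
  rw [← (Equiv.piEquivPiSubtypeProd (fun i => i ∈ C) X).symm.sum_comp, Fintype.sum_prod_type]
  have e : ∀ (u : ∀ i : {i // i ∈ C}, X i.1) (v : ∀ i : {i // ¬ i ∈ C}, X i.1),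
      (∏ i ∈ C, Q i ((Equiv.piEquivPiSubtypeProd (fun i => i ∈ C) X).symm (u,v) i)) *
        ∏ i ∈ Cᶜ, G i ((Equiv.piEquivPiSubtypeProd (fun i => i ∈ C) X).symm (u,v) i)
          (fun j => (Equiv.piEquivPiSubtypeProd (fun i => i ∈ C) X).symm (u,v) j.1)
      = (∏ i : {i // i ∈ C}, Q i.1 (u i)) * ∏ i : {i // ¬ i ∈ C}, G i.1 (v i) u := by
    intro u v
    have hr : (fun j : {i // i ∈ C} => (Equiv.piEquivPiSubtypeProd (fun i => i ∈ C) X).symm (u,v) j.1) = u := by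
      funext j; simp [Equiv.piEquivPiSubtypeProd]
    rw [hr]
    congr 1
    · rw [Finset.prod_subtype C (p := fun i => i ∈ C) (by simp)]
      refine Finset.prod_congr rfl fun j _ => ?_
      simp [Equiv.piEquivPiSubtypeProd]
    · rw [Finset.prod_subtype Cᶜ (p := fun i => ¬ i ∈ C) (by simp)]
      refine Finset.prod_congr rfl fun j _ => ?_
      simp [Equiv.piEquivPiSubtypeProd, j.2]
  simp_rw [e, ← Finset.mul_sum]
  calc _ ≤ ∑ u : ∀ i : {i // i ∈ C}, X i.1, (∏ i : {i // i ∈ C}, Q i.1 (u i)) * 1 := by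
        apply Finset.sum_le_sum
        intro u _
        apply mul_le_mul_of_nonneg_left _ (Finset.prod_nonneg fun i _ => hQ0 _ _)
        rw [← Fintype.piFinset_univ, ← Finset.prod_univ_sum (fun _ => Finset.univ) (fun (i : {i // ¬ i ∈ C}) xi => G i.1 xi u)]
        exact Finset.prod_le_one (fun i _ => Finset.sum_nonneg fun _ _ => hG0 _ _ _) (fun i _ => hG1 i.1 i.2 u)
    _ = 1 := by
        simp_rw [mul_one]
        rw [← Fintype.piFinset_univ, ← Finset.prod_univ_sum (fun _ => Finset.univ) (fun (i : {i // i ∈ C}) xi => Q i.1 xi)]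
        exact Finset.prod_eq_one fun i _ => hQ1 _

lemma pk_fiber {Ω α β A : Type*} [Fintype Ω] [Fintype α] [Fintype β] [Fintype A]
    (f : Ω → α) (g : Ω → β) (p : Ω × A → ℝ) (M : α × β × A → ℝ)
    (hM : ∀ z, M z = ∑ x, if g x = z.2.1 ∧ f x = z.1 then p (x, z.2.2) else 0)
    (F : α × β × A → ℝ) :
    ∑ z : α × β × A, M z * F z
      = ∑ s : Ω × A, p s * F (f s.1, g s.1, s.2) := by
  simp_rw [hM, Finset.sum_mul]
  rw [Finset.sum_comm, Fintype.sum_prod_type]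
  refine Finset.sum_congr rfl fun x _ => ?_
  rw [Fintype.sum_prod_type, Finset.sum_eq_single (f x), Fintype.sum_prod_type,
    Finset.sum_eq_single (g x)]
  · simp
  · intro b _ hb; simp [hb.symm]
  · simp
  · intro b _ hb; simp [hb.symm]
  · simp

lemma pk_kl {n : ℕ} (X : Fin n → Type*) [∀ i, Fintype (X i)]
    {A : Type*} [Fintype A] [Nonempty A]
    (Q : ∀ i, X i → ℝ) (hQ0 : ∀ i xi, 0 ≤ Q i xi) (hQ1 : ∀ i, ∑ xi, Q i xi = 1)
    (C : Finset (Fin n)) (γ : ℝ) (hγ : 0 < γ)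
    (p : ((∀ i, X i) × A) → ℝ) (hp0 : ∀ s, 0 ≤ p s) (hp1 : ∑ s, p s = 1)
    (hpQ : ∀ s, p s * γ ≤ ∏ i, Q i (s.1 i))
    (PR : (∀ i : {i // i ∈ C}, X i.1) → A → ℝ)
    (PiR : ∀ i : Fin n, X i → (∀ j : {j // j ∈ C}, X j.1) → A → ℝ)
    (hPi0 : ∀ i xi u a, 0 ≤ PiR i xi u a) (hPR0 : ∀ u a, 0 ≤ PR u a)
    (hsum : ∀ i u a, ∑ xi, PiR i xi u a = PR u a)
    (hle : ∀ i x a, p (x, a) ≤ PiR i (x i) (fun j => x j.1) a) :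
    ∑ i ∈ Cᶜ, ∑ s, p s * Real.log (PiR i (s.1 i) (fun j => s.1 j.1) s.2 /
        (Q i (s.1 i) * PR (fun j => s.1 j.1) s.2))
      ≤ Real.log (Fintype.card A) + Real.log (1 / γ) := by
  have hA : (0:ℝ) < Fintype.card A := by exact_mod_cast Fintype.card_pos
  let W : ((∀ i, X i) × A) → ℝ := fun s => (1 / Fintype.card A) * ((∏ i ∈ C, Q i (s.1 i)) *
    ∏ i ∈ Cᶜ, (PiR i (s.1 i) (fun j => s.1 j.1) s.2 / PR (fun j => s.1 j.1) s.2))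
  have hW : ∑ s, W s ≤ 1 := by
    simp only [W]
    rw [← Finset.mul_sum, Fintype.sum_prod_type_right]
    have : ∀ a : A, ∑ x : ∀ i, X i, ((∏ i ∈ C, Q i (x i)) *
        ∏ i ∈ Cᶜ, (PiR i (x i) (fun j => x j.1) a / PR (fun j => x j.1) a)) ≤ 1 := by
      intro a
      apply pk_sumprod X C Q hQ0 hQ1 (fun i xi u => PiR i xi u a / PR u a)
      · intro i xi u; exact div_nonneg (hPi0 _ _ _ _) (hPR0 _ _)
      · intro i _ u
        rw [← Finset.sum_div, hsum]
        exact div_self_le_one _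
    calc _ ≤ (1 / (Fintype.card A : ℝ)) * ∑ a : A, (1:ℝ) := by
          apply mul_le_mul_of_nonneg_left (Finset.sum_le_sum fun a _ => this a) (by positivity)
      _ = 1 := by simp [hA.ne']
  have hpt : ∀ s, p s * (∑ i ∈ Cᶜ, Real.log (PiR i (s.1 i) (fun j => s.1 j.1) s.2 /
        (Q i (s.1 i) * PR (fun j => s.1 j.1) s.2)) - (Real.log (Fintype.card A) + Real.log (1 / γ)))
        ≤ W s - p s := by
    rintro ⟨x, a⟩
    rcases (hp0 (x,a)).eq_or_lt with h0 | hpos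
    · rw [← h0, zero_mul, sub_zero]
      exact mul_nonneg (by positivity) (mul_nonneg (Finset.prod_nonneg fun _ _ => hQ0 _ _)
        (Finset.prod_nonneg fun _ _ => div_nonneg (hPi0 _ _ _ _) (hPR0 _ _)))
    have hprod : 0 < ∏ i, Q i (x i) := (mul_pos hpos hγ).trans_le (hpQ (x,a))
    have hQp : ∀ i, 0 < Q i (x i) := fun i => (hQ0 _ _).lt_of_ne' fun h =>
      hprod.ne' (Finset.prod_eq_zero (Finset.mem_univ i) h)
    have hPip : ∀ i, 0 < PiR i (x i) (fun j => x j.1) a := fun i => hpos.trans_le (hle i x a)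
    have hPRp : ∀ i : Fin n, 0 < PR (fun j => x j.1) a := fun i => by
      rw [← hsum i]
      exact (hPip i).trans_le (Finset.single_le_sum (f := fun xi => PiR i xi (fun j => x j.1) a)
        (fun _ _ => hPi0 _ _ _ _) (Finset.mem_univ (x i)))
    have hrp : ∀ i, 0 < PiR i (x i) (fun j => x j.1) a / (Q i (x i) * PR (fun j => x j.1) a) :=
      fun i => div_pos (hPip i) (mul_pos (hQp i) (hPRp i))
    set V := γ / Fintype.card A *
      ∏ i ∈ Cᶜ, (PiR i (x i) (fun j => x j.1) a / (Q i (x i) * PR (fun j => x j.1) a)) with hV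
    have hprp := Finset.prod_pos fun i (_ : i ∈ Cᶜ) => hrp i
    have hVp : 0 < V := mul_pos (by positivity) hprp
    have hlogV : Real.log V = ∑ i ∈ Cᶜ, Real.log (PiR i (x i) (fun j => x j.1) a /
        (Q i (x i) * PR (fun j => x j.1) a)) - (Real.log (Fintype.card A) + Real.log (1 / γ)) := by
      rw [hV, Real.log_mul (by positivity) hprp.ne', Real.log_prod (fun i _ => (hrp i).ne'),
        Real.log_div hγ.ne' hA.ne', Real.log_div one_ne_zero hγ.ne', Real.log_one]
      ring
    change p (x,a) * (∑ i ∈ Cᶜ, Real.log (PiR i (x i) (fun j => x j.1) a /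
        (Q i (x i) * PR (fun j => x j.1) a)) - (Real.log (Fintype.card A) + Real.log (1 / γ))) ≤ _
    rw [← hlogV]
    have h1 := mul_le_mul_of_nonneg_left (Real.log_le_sub_one_of_pos hVp) hpos.le
    have h2 : p (x,a) * V ≤ W (x,a) := by
      calc p (x,a) * V = (1 / Fintype.card A) * ((p (x,a) * γ) * ∏ i ∈ Cᶜ, (PiR i (x i) (fun j => x j.1) a / (Q i (x i) * PR (fun j => x j.1) a))) := by
            rw [hV]; ring
        _ ≤ (1 / Fintype.card A) * ((∏ i, Q i (x i)) * ∏ i ∈ Cᶜ, (PiR i (x i) (fun j => x j.1) a / (Q i (x i) * PR (fun j => x j.1) a))) := by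
            apply mul_le_mul_of_nonneg_left _ (by positivity)
            exact mul_le_mul_of_nonneg_right (hpQ (x,a)) hprp.le
        _ = W (x,a) := by
            simp only [W]
            rw [← Finset.prod_mul_prod_compl C, mul_assoc, ← Finset.prod_mul_distrib]
            congr 2
            refine Finset.prod_congr rfl fun i _ => ?_
            have := (hQp i).ne'
            have := (hPRp i).ne'
            field_simp
    linarith
  have := Finset.sum_le_sum fun s (_ : s ∈ Finset.univ) => hpt s
  simp_rw [mul_sub] at this
  rw [Finset.sum_sub_distrib, Finset.sum_sub_distrib, ← Finset.sum_mul, hp1, one_mul] at this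
  simp_rw [Finset.mul_sum] at this
  rw [Finset.sum_comm] at this
  linarith

/-- **Average ℓ₁ closeness of single coordinates after conditioning** (classical form of
condition 1 of the key lemma of the direct product theorem).
`P'` is `P` conditioned on the event `E` (of probability `γ`); the combined register
`R = ((Xᵢ)_{i ∈ C}, 𝒜)` ranges over pairs `(xc, a)` with `xc : ∀ i ∈ C, X i`;
`PR'` is the marginal of `P'` on `R` and `PiR i` is its marginal on `Xᵢ × R`. -/
theorem avg_l1_single_coordinates_after_conditioning
    {n : ℕ} (X : Fin n → Type*) [∀ i, Fintype (X i)] [∀ i, Nonempty (X i)]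
    {A : Type*} [Fintype A] [Nonempty A]
    (Q : ∀ i, X i → ℝ) (hQ0 : ∀ i xi, 0 ≤ Q i xi) (hQ1 : ∀ i, ∑ xi, Q i xi = 1)
    (P : ((∀ i, X i) × A) → ℝ) (hP0 : ∀ s, 0 ≤ P s) (hP1 : ∑ s, P s = 1)
    (hmarg : ∀ x : ∀ i, X i, (∑ a, P (x, a)) = ∏ i, Q i (x i))
    (E : Set ((∀ i, X i) × A)) (γ : ℝ) (hγ : 0 < γ)
    (hPE : ∑ s, (if s ∈ E then P s else 0) = γ)
    (C : Finset (Fin n)) (hC : (C.card : ℝ) ≤ (n : ℝ) / 2) :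
    let P' : ((∀ i, X i) × A) → ℝ := fun s => if s ∈ E then P s / γ else 0
    let restr : (∀ i, X i) → (∀ i : {i // i ∈ C}, X i.1) := fun x i => x i.1
    let PR' : (∀ i : {i // i ∈ C}, X i.1) → A → ℝ :=
      fun xc a => ∑ x, if restr x = xc then P' (x, a) else 0
    let PiR : ∀ i : Fin n, X i → (∀ j : {j // j ∈ C}, X j.1) → A → ℝ :=
      fun i xi xc a => ∑ x, if restr x = xc ∧ x i = xi then P' (x, a) else 0
    let δ : ℝ := (Real.log (Fintype.card A) + Real.log (1 / γ)) / n
    (1 / ((n : ℝ) - C.card)) *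
        ∑ i ∈ Cᶜ, ∑ xi, ∑ xc, ∑ a, |PiR i xi xc a - Q i xi * PR' xc a| ≤
      2 * Real.sqrt δ := by
  intro P' restr PR' PiR δ
  have hP'0 : ∀ s, 0 ≤ P' s := fun s => by
    simp only [P']; split_ifs
    · exact div_nonneg (hP0 s) hγ.le
    · exact le_rfl
  have hP'1 : ∑ s, P' s = 1 := by
    have : ∀ s, P' s = (if s ∈ E then P s else 0) / γ := fun s => by
      simp only [P']; split_ifs <;> simp
    simp_rw [this]
    rw [← Finset.sum_div, hPE, div_self hγ.ne']
  have hPQ : ∀ s, P' s * γ ≤ ∏ i, Q i (s.1 i) := by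
    rintro ⟨x, a⟩
    have h1 : P (x,a) ≤ ∏ i, Q i (x i) := by
      rw [← hmarg]
      exact Finset.single_le_sum (f := fun a => P (x,a)) (fun _ _ => hP0 _) (Finset.mem_univ a)
    simp only [P']; split_ifs
    · rwa [div_mul_cancel₀ _ hγ.ne']
    · rw [zero_mul]; exact (hP0 _).trans h1
  have hPR0 : ∀ u a, 0 ≤ PR' u a := fun u a => Finset.sum_nonneg fun x _ => by
    split_ifs; exacts [hP'0 _, le_rfl]
  have hPi0 : ∀ i xi u a, 0 ≤ PiR i xi u a := fun i xi u a => Finset.sum_nonneg fun x _ => by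
    split_ifs; exacts [hP'0 _, le_rfl]
  have hsum : ∀ i u a, ∑ xi, PiR i xi u a = PR' u a := by
    intro i u a
    simp only [PiR, PR']
    rw [Finset.sum_comm]
    refine Finset.sum_congr rfl fun x _ => ?_
    by_cases h : restr x = u <;> simp [h]
  have hle : ∀ i x a, P' (x, a) ≤ PiR i (x i) (fun j => x j.1) a := by
    intro i x a
    have := Finset.single_le_sum (f := fun y : ∀ i, X i =>
      if restr y = restr x ∧ y i = x i then P' (y, a) else 0)
      (fun y _ => by split_ifs; exacts [hP'0 _, le_rfl]) (Finset.mem_univ x)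
    simpa using this
  have hKL := pk_kl X Q hQ0 hQ1 C γ hγ P' hP'0 hP'1 hPQ PR' PiR hPi0 hPR0 hsum hle
  have hpin : ∀ i, (∑ xi, ∑ xc, ∑ a, |PiR i xi xc a - Q i xi * PR' xc a|)^2 ≤
      2 * ∑ s, P' s * Real.log (PiR i (s.1 i) (fun j => s.1 j.1) s.2 /
        (Q i (s.1 i) * PR' (fun j => s.1 j.1) s.2)) := by
    intro i
    have hfib := pk_fiber (fun x : ∀ i, X i => x i) restr P' (fun z => PiR i z.1 z.2.1 z.2.2)
      (fun z => Finset.sum_congr rfl fun x _ => by congr)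
    have hPi1 : ∑ z : X i × (∀ j : {j // j ∈ C}, X j.1) × A, PiR i z.1 z.2.1 z.2.2 = 1 := by
      have := hfib (fun _ => 1)
      simp only [mul_one] at this
      rw [hP'1] at this
      exact this
    have hPR1 : ∑ w : (∀ j : {j // j ∈ C}, X j.1) × A, PR' w.1 w.2 = 1 := by
      rw [← hPi1]
      refine Eq.trans ?_ (Fintype.sum_prod_type_right _).symm
      exact Finset.sum_congr rfl fun (w : (∀ j : {j // j ∈ C}, X j.1) × A) _ => (hsum i w.1 w.2).symm
    have := pk_pinsker (fun z : X i × (∀ j : {j // j ∈ C}, X j.1) × A => PiR i z.1 z.2.1 z.2.2)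
      (fun z => Q i z.1 * PR' z.2.1 z.2.2) (fun _ => hPi0 _ _ _ _)
      (fun _ => mul_nonneg (hQ0 _ _) (hPR0 _ _)) ?_ hPi1 ?_
    · have h2 := hfib (fun z => Real.log (PiR i z.1 z.2.1 z.2.2 / (Q i z.1 * PR' z.2.1 z.2.2)))
      have h4 : ∑ xi, ∑ xc, ∑ a, |PiR i xi xc a - Q i xi * PR' xc a| =
          ∑ z : X i × (∀ j : {j // j ∈ C}, X j.1) × A,
            |PiR i z.1 z.2.1 z.2.2 - Q i z.1 * PR' z.2.1 z.2.2| := by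
        rw [Fintype.sum_prod_type]
        refine Finset.sum_congr rfl fun xi _ => ?_
        rw [Fintype.sum_prod_type]
      rw [h4]
      exact this.trans_eq (congrArg (fun t => 2 * t) h2)
    · rintro ⟨xi, u, a⟩ h
      rcases mul_eq_zero.1 h with h | h
      · refine Finset.sum_eq_zero fun x _ => ?_
        split_ifs with hx
        · have h1 := hPQ (x, a)
          rw [Finset.prod_eq_zero (Finset.mem_univ i) (by simpa [hx.2] using h)] at h1
          exact le_antisymm (by by_contra hc; push Not at hc; nlinarith [mul_pos hc hγ]) (hP'0 _)
        · rfl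
      · have h1 := hsum i u a
        rw [h, Finset.sum_eq_zero_iff_of_nonneg (fun _ _ => hPi0 _ _ _ _)] at h1
        exact h1 xi (Finset.mem_univ _)
    · rw [Fintype.sum_prod_type]
      simp_rw [← Finset.mul_sum]
      rw [← Finset.sum_mul, hQ1, hPR1, one_mul]
  set L := Real.log (Fintype.card A) + Real.log (1 / γ) with hL
  set T := ∑ i ∈ Cᶜ, ∑ xi, ∑ xc, ∑ a, |PiR i xi xc a - Q i xi * PR' xc a| with hT
  have hcard : ((Cᶜ.card : ℕ) : ℝ) = (n : ℝ) - C.card := by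
    rw [Finset.card_compl, Fintype.card_fin, Nat.cast_sub (by simpa using Finset.card_le_univ C)]
  have hT2 : T^2 ≤ ((n:ℝ) - C.card) * (2 * L) := by
    rw [← hcard]
    refine (sq_sum_le_card_mul_sum_sq).trans ?_
    apply mul_le_mul_of_nonneg_left _ (Nat.cast_nonneg _)
    refine (Finset.sum_le_sum fun i _ => hpin i).trans ?_
    rw [← Finset.mul_sum]
    linarith
  rcases Nat.eq_zero_or_pos n with hn | hn
  · subst hn
    have : T = 0 := by rw [hT]; apply Finset.sum_eq_zero; intro i; exact i.elim0
    rw [this, mul_zero]; positivity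
  have hn' : (0:ℝ) < n := by exact_mod_cast hn
  have hm : (n:ℝ) / 2 ≤ (n:ℝ) - C.card := by linarith
  have hmp : 0 < (n:ℝ) - C.card := by linarith
  generalize (n:ℝ) - C.card = m at *
  have hL0 : 0 ≤ L := by
    by_contra hc
    push Not at hc
    nlinarith [sq_nonneg T, mul_pos hmp (neg_pos.2 hc)]
  have e : 2 * Real.sqrt δ = Real.sqrt (4 * δ) := by
    rw [Real.sqrt_mul (by norm_num), show (4:ℝ) = 2^2 by norm_num, Real.sqrt_sq (by norm_num)]
  rw [e]
  apply Real.le_sqrt_of_sq_le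
  have h1 : (1 / m * T)^2 ≤ 2 * L / m := by
    rw [mul_pow, one_div, inv_pow, inv_mul_le_iff₀ (by positivity)]
    calc _ ≤ _ := hT2
      _ = _ := by field_simp
  refine h1.trans ?_
  change 2 * L / m ≤ 4 * (L / n)
  rw [← mul_div_assoc, div_le_div_iff₀ hmp hn']
  nlinarith
end
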